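/- Let Ω ⊂ ℝ² be a bounded, open, connected set with Lipschitz boundary and let u ∈ W^{1,1}(Ω;S¹). Then there exists a sequence of pairs ((x_i,y_i))_{i∈ℕ} of points of cl(Ω) with x_i ≠ y_i, for each i at least one of x_i, y_i belonging to Ω, Σ_{i=1}^∞ d̄_Ω(x_i,y_i) < +∞, and such that ⟨Det(∇u),φ⟩ = π Σ_{i=1}^∞ (φ(x_i) − φ(y_i)) for every φ ∈ Lip₀(Ω) (the series being absolutely convergent). -/

import Mathlib

open MeasureTheory Metric Filter Set
open scoped ENNReal NNReal Topology Classical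

noncomputable section

abbrev R2 := EuclideanSpace ℝ (Fin 2)

/-- `Ω ⊂ ℝ²` has Lipschitz boundary: near every boundary point, after a rigid motion,
`Ω` coincides with the open region strictly above the graph of a Lipschitz function. -/
def HasLipschitzBoundary (Ω : Set R2) : Prop :=
  ∀ p ∈ frontier Ω, ∃ r : ℝ, 0 < r ∧ ∃ (f : R2 ≃ᵢ R2) (γ : ℝ → ℝ) (L : ℝ≥0),
    LipschitzWith L γ ∧ ∀ x ∈ Metric.ball p r, (x ∈ Ω ↔ γ (f x 0) < f x 1)

/-- `G` is the weak (distributional) gradient of `u` on `Ω`: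
`∫_Ω u_i ∂_j φ = -∫_Ω G_{ij} φ` for all test functions `φ ∈ C_c^∞(Ω)`. -/
def IsWeakGradient (Ω : Set R2) (u : R2 → R2) (G : R2 → Matrix (Fin 2) (Fin 2) ℝ) : Prop :=
  ∀ φ : R2 → ℝ, ContDiff ℝ (⊤ : ℕ∞) φ → HasCompactSupport φ → tsupport φ ⊆ Ω →
    ∀ i j : Fin 2,
      (∫ x in Ω, u x i * fderiv ℝ φ x (EuclideanSpace.single j 1)) =
        - ∫ x in Ω, G x i j * φ x

/-- `u ∈ W^{1,1}(Ω;ℝ²)` with weak gradient `G`. -/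
def MemW11 (Ω : Set R2) (u : R2 → R2) (G : R2 → Matrix (Fin 2) (Fin 2) ℝ) : Prop :=
  IntegrableOn u Ω ∧ (∀ i j : Fin 2, IntegrableOn (fun x => G x i j) Ω) ∧
    IsWeakGradient Ω u G

/-- `|u| = 1` a.e. in `Ω`. -/
def SphereValued (Ω : Set R2) (u : R2 → R2) : Prop :=
  ∀ᵐ x ∂(volume.restrict Ω), ‖u x‖ = 1

/-- Frobenius norm of a `2×2` matrix. -/
def frob (M : Matrix (Fin 2) (Fin 2) ℝ) : ℝ :=
  Real.sqrt (∑ i, ∑ j, (M i j) ^ 2)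

/-- Jacobian matrix of a map `v : ℝ² → ℝ²`. -/
def jacobianMatrix (v : R2 → R2) (x : R2) : Matrix (Fin 2) (Fin 2) ℝ :=
  Matrix.of fun i j => fderiv ℝ v x (EuclideanSpace.single j 1) i

/-- Classical graph area `A(v,A) = ∫_A √(1 + |∇v|² + (Jv)²)` of a `C¹` map. -/
def classicalArea (A : Set R2) (v : R2 → R2) : ℝ≥0∞ :=
  ∫⁻ x in A, ENNReal.ofReal
    (Real.sqrt (1 + (∑ i, ∑ j, (jacobianMatrix v x i j) ^ 2) + (jacobianMatrix v x).det ^ 2))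

/-- `L¹`-relaxed area functional `𝒜(u,A)`. -/
def relaxedArea (u : R2 → R2) (A : Set R2) : ℝ≥0∞ :=
  sInf { a : ℝ≥0∞ | ∃ v : ℕ → R2 → R2,
    (∀ k, ContDiffOn ℝ 1 (v k) A) ∧
    (∀ k, IntegrableOn (fun x => v k x - u x) A) ∧
    Tendsto (fun k => ∫ x in A, ‖v k x - u x‖) atTop (nhds 0) ∧
    a = Filter.liminf (fun k => classicalArea A (v k)) atTop }

/-- `λ_u = (1/2)(u₁ ∇^⊥u₂ − u₂ ∇^⊥u₁)`, computed from the weak gradient `G`. -/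
def lambdaVec (u : R2 → R2) (G : R2 → Matrix (Fin 2) (Fin 2) ℝ) (x : R2) : Fin 2 → ℝ :=
  ![ (1 / 2) * (-(u x 0) * G x 1 1 + u x 1 * G x 0 1),
     (1 / 2) * (u x 0 * G x 1 0 - u x 1 * G x 0 0) ]

/-- Distributional Jacobian pairing `⟨Det(∇u), φ⟩ = ∫_Ω λ_u · ∇φ`. -/
def detPairing (Ω : Set R2) (u : R2 → R2) (G : R2 → Matrix (Fin 2) (Fin 2) ℝ)
    (φ : R2 → ℝ) : ℝ :=
  ∫ x in Ω, ∑ j, lambdaVec u G x j * fderiv ℝ φ x (EuclideanSpace.single j 1)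

/-- `φ ∈ Lip₀(Ω)`: Lipschitz on `cl(Ω)` and vanishing on `∂Ω`. -/
def MemLip0 (Ω : Set R2) (φ : R2 → ℝ) : Prop :=
  (∃ L : ℝ≥0, LipschitzOnWith L φ (closure Ω)) ∧ ∀ p ∈ frontier Ω, φ p = 0

/-- Admissible test functions for the flat norm: Lipschitz constant `≤ L` on `cl(Ω)`,
vanishing on `Z`, and bounded by `1` on `cl(Ω)`. -/
def FlatAdmissible (Ω Z : Set R2) (L : ℝ≥0) (φ : R2 → ℝ) : Prop :=
  LipschitzOnWith L φ (closure Ω) ∧ (∀ p ∈ Z, φ p = 0) ∧ ∀ p ∈ closure Ω, |φ p| ≤ 1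

/-- Flat norm of a functional `F`, with vanishing condition on the set `Z`. -/
def flatNormOn (Ω Z : Set R2) (L : ℝ≥0) (F : (R2 → ℝ) → ℝ) : ℝ≥0∞ :=
  ⨆ φ ∈ {φ : R2 → ℝ | FlatAdmissible Ω Z L φ}, ENNReal.ofReal (F φ)

/-- Flat norm of a functional `F` on `Lip₀(Ω)`; `L = 2` gives `‖·‖_{flat,α}` (α = 1/2),
`L = 1` gives `‖·‖_flat`. -/
def flatNorm (Ω : Set R2) (L : ℝ≥0) (F : (R2 → ℝ) → ℝ) : ℝ≥0∞ :=
  flatNormOn Ω (frontier Ω) L F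

/-- `d̄_Ω(x,y) = min{|x−y|, dist(x,∂Ω) + dist(y,∂Ω)}`. -/
def dbar (Ω : Set R2) (x y : R2) : ℝ :=
  min (dist x y) (Metric.infDist x (frontier Ω) + Metric.infDist y (frontier Ω))

/-- Countably subadditive interior envelope `𝒜**(u,V)` (relative to `Ω`). -/
def envA (u : R2 → R2) (Ω V : Set R2) : ℝ≥0∞ :=
  sInf { a : ℝ≥0∞ | ∃ A : ℕ → Set R2,
    (∀ k, IsOpen (A k) ∧ A k ⊆ Ω) ∧ V ⊆ ⋃ k, A k ∧ a = ∑' k, relaxedArea u (A k) }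

/-- Property `(P_f)` for a finite family of pairs of points of `cl(Ω)`. -/
def SatisfiesPf (Ω : Set R2) {n : ℕ} (x y : Fin n → R2) : Prop :=
  (∀ k, (x k ∈ Ω ∧ y k ∈ frontier Ω ∧ dist (x k) (y k) = Metric.infDist (x k) (frontier Ω)) ∨
        (y k ∈ Ω ∧ x k ∈ frontier Ω ∧ dist (x k) (y k) = Metric.infDist (y k) (frontier Ω))) ∧
  ∀ i j, x i ∈ Ω → y j ∈ Ω → x i ≠ y j

/-- The points of the family `x, y` lying in `Ω` are distinct and three by three
not collinear. -/
def InteriorPointsGeneric (Ω : Set R2) {n : ℕ} (x y : Fin n → R2) : Prop :=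
  (∀ a b : Fin n ⊕ Fin n, Sum.elim x y a ∈ Ω → Sum.elim x y b ∈ Ω → a ≠ b →
    Sum.elim x y a ≠ Sum.elim x y b) ∧
  ∀ a b c : Fin n ⊕ Fin n, Sum.elim x y a ∈ Ω → Sum.elim x y b ∈ Ω → Sum.elim x y c ∈ Ω →
    a ≠ b → a ≠ c → b ≠ c →
    ¬ Collinear ℝ ({Sum.elim x y a, Sum.elim x y b, Sum.elim x y c} : Set R2)

/-- `ι(w₁,w₂) = (w₁,−w₂)`. -/
def conjPt (w : R2) : R2 := (WithLp.equiv 2 (Fin 2 → ℝ)).symm ![w 0, -(w 1)]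

/-- `u` is a (positive/negative) vortex around the points of the family lying in `Ω`:
the closed discs of radii `ρ` are contained in `Ω` and pairwise disjoint,
`u(z) = (z−x_i)/|z−x_i|` on `B_{ρ}(x_i)` and `u(z) = ι((z−y_j)/|z−y_j|)` on `B_{ρ}(y_j)`. -/
def VortexAt (Ω : Set R2) (u : R2 → R2) {n : ℕ} (x y : Fin n → R2)
    (ρ : Fin n ⊕ Fin n → ℝ) : Prop :=
  (∀ a, Sum.elim x y a ∈ Ω → Metric.closedBall (Sum.elim x y a) (ρ a) ⊆ Ω) ∧
  (∀ a b, a ≠ b → Sum.elim x y a ∈ Ω → Sum.elim x y b ∈ Ω →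
    Disjoint (Metric.closedBall (Sum.elim x y a) (ρ a))
      (Metric.closedBall (Sum.elim x y b) (ρ b))) ∧
  (∀ i, x i ∈ Ω → ∀ᵐ z ∂(volume.restrict (Metric.ball (x i) (ρ (Sum.inl i)))),
    u z = ‖z - x i‖⁻¹ • (z - x i)) ∧
  (∀ i, y i ∈ Ω → ∀ᵐ z ∂(volume.restrict (Metric.ball (y i) (ρ (Sum.inr i)))),
    u z = conjPt (‖z - y i‖⁻¹ • (z - y i)))

/-- The energy `E(I_P, I_D, τ)` of a partition `{I_Dᶜ, I_D}` of `I` and an injection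
`τ : I_D → I`. -/
def energy (Ω : Set R2) {n : ℕ} (x y : Fin n → R2) (ID : Finset (Fin n))
    (τ : Fin n → Fin n) : ℝ≥0∞ :=
  ((IDᶜ.filter fun k => x k ∈ Ω).card : ℝ≥0∞) +
  (((Finset.univ \ ID.image τ).filter fun j => y j ∈ Ω).card : ℝ≥0∞) +
  2 * ∑ k ∈ ID, μH[1] (segment ℝ (y (τ k)) (x k) ∩ Ω)

/-!
Off a null set of grid lines, mollifications of `u` and of its gradient converge in `L¹` on the
lines, so `u` has an absolutely continuous representative of modulus one there, and the circulation
of `λ_u` around a grid cell is half an increment of phase along a closed curve, that is, an integer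
multiple of `π`. Averaging over the translates of the grid and comparing `λ_u` with a smooth
compactly supported field show that, for a suitable origin, these integers form a finite chain
which, times `π`, is as close as desired to the Jacobian in the dual of `Lip₀(Ω)`.

Consecutive chains of an approximating sequence then differ little in that dual norm. By Kantorovich
duality for `d̄_Ω`, for which `∂Ω` is a reservoir of charges of both signs, their difference is
represented by dipoles of small total length: an optimal potential makes enough pairs tight for
Hall's marriage condition, which turns the optimal plan into a matching. Telescoping yields the
summable sequence of dipoles.
-/

section Duality

variable {X ι : Type*} {D : X → X → ℝ}

/-- Kantorovich potentials of the transport cost `D`, the admissible functions of the dual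
problem. -/
def IsPotential (D : X → X → ℝ) (φ : X → ℝ) : Prop :=
  ∀ x y, φ x - φ y ≤ D x y

theorem isClosed_setOf_isPotential : IsClosed {φ : X → ℝ | IsPotential D φ} := by
  simp only [IsPotential, ofPred_forall]
  exact isClosed_iInter fun x => isClosed_iInter fun y =>
    isClosed_le ((continuous_apply x).sub (continuous_apply y)) continuous_const

theorem isCompact_setOf_isPotential_apply_eq_zero (x₀ : X) :
    IsCompact {φ : X → ℝ | IsPotential D φ ∧ φ x₀ = 0} := by
  refine (isCompact_univ_pi fun x => isCompact_Icc (a := -D x₀ x) (b := D x x₀)).of_isClosed_subset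
    (isClosed_setOf_isPotential.inter (isClosed_eq (continuous_apply x₀) continuous_const)) ?_
  rintro φ ⟨hφ, h0⟩ x -
  have h₁ := hφ x₀ x
  have h₂ := hφ x x₀
  constructor <;> linarith

theorem exists_isPotential_forall_sum_le [Fintype ι] (hD : ∀ x y, 0 ≤ D x y) (a b : ι → X) :
    ∃ φ, IsPotential D φ ∧
      ∀ ψ, IsPotential D ψ → ∑ i, (ψ (a i) - ψ (b i)) ≤ ∑ i, (φ (a i) - φ (b i)) := by
  rcases isEmpty_or_nonempty X with hX | ⟨⟨x₀⟩⟩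
  · exact ⟨0, fun x => isEmptyElim x, fun ψ _ => by simp [Subsingleton.elim ψ 0]⟩
  obtain ⟨φ, ⟨hφ, -⟩, hmax⟩ := (isCompact_setOf_isPotential_apply_eq_zero x₀).exists_isMaxOn
    (f := fun φ : X → ℝ => ∑ i, (φ (a i) - φ (b i)))
    ⟨0, fun x y => by simpa using hD x y, rfl⟩
    (continuous_finsetSum _ fun i _ =>
      (continuous_apply (a i)).sub (continuous_apply (b i))).continuousOn
  refine ⟨φ, hφ, fun ψ hψ => ?_⟩
  have hnormalized : IsPotential D fun x => ψ x - ψ x₀ := fun x y => by simpa using hψ x y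
  have hle : ∑ i, (ψ (a i) - ψ x₀ - (ψ (b i) - ψ x₀)) ≤ ∑ i, (φ (a i) - φ (b i)) :=
    hmax ⟨hnormalized, sub_self _⟩
  simpa only [sub_sub_sub_cancel_right] using hle

theorem isPotential_iInf_add [Finite ι] [Nonempty ι] (htri : ∀ x y z, D x z ≤ D x y + D y z)
    (w : ι → ℝ) (b : ι → X) : IsPotential D fun x => ⨅ j, (w j + D x (b j)) := by
  intro x y
  rw [sub_le_iff_le_add, ← sub_le_iff_le_add']
  refine le_ciInf fun j => ?_
  have h₁ : ⨅ j, (w j + D x (b j)) ≤ w j + D x (b j) := ciInf_le (finite_range _).bddBelow j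
  linarith [htri x y (b j)]

/-- The targets `b j` to which `φ` makes the transport of `a i` tight. -/
def tightTargets [Fintype ι] (D : X → X → ℝ) (φ : X → ℝ) (a b : ι → X) (i : ι) : Finset ι :=
  Finset.univ.filter fun j => φ (a i) - φ (b j) = D (a i) (b j)

/-- If Hall's condition failed for `S`, then raising the potential on `a '' S` and on its tight
targets would increase the dual functional. -/
theorem card_le_card_biUnion_tightTargets [Fintype ι] (hself : ∀ x, D x x = 0)
    (htri : ∀ x y z, D x z ≤ D x y + D y z) {a b : ι → X} {φ : X → ℝ} (hφ : IsPotential D φ)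
    (hmax : ∀ ψ, IsPotential D ψ → ∑ i, (ψ (a i) - ψ (b i)) ≤ ∑ i, (φ (a i) - φ (b i)))
    (S : Finset ι) : S.card ≤ (S.biUnion (tightTargets D φ a b)).card := by
  set N := S.biUnion (tightTargets D φ a b)
  by_contra! hcard
  obtain ⟨i₀, -⟩ := Finset.card_pos.1 (hcard.trans_le' (Nat.zero_le _))
  have : Nonempty ι := ⟨i₀⟩
  have hslack : ∀ᶠ τ : ℝ in 𝓝[>] 0, ∀ i j, i ∈ S → j ∉ N →
      τ ≤ D (a i) (b j) - (φ (a i) - φ (b j)) := by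
    simp only [eventually_all]
    intro i j hi hj
    have hne : φ (a i) - φ (b j) ≠ D (a i) (b j) := fun h =>
      hj (Finset.mem_biUnion.2 ⟨i, hi, by simp [tightTargets, h]⟩)
    filter_upwards [nhdsWithin_le_nhds
      (Iio_mem_nhds (sub_pos.2 ((hφ (a i) (b j)).lt_of_ne hne)))] with τ hτ using hτ.le
  obtain ⟨τ, hslack, hτ : 0 < τ⟩ := (hslack.and self_mem_nhdsWithin).exists
  set ψ : X → ℝ := fun x => ⨅ j, (φ (b j) + (if j ∈ N then τ else 0) + D x (b j))
  have hψb (j : ι) : ψ (b j) ≤ φ (b j) + if j ∈ N then τ else 0 :=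
    (ciInf_le (finite_range _).bddBelow j).trans_eq (by rw [hself, add_zero])
  have hψa (i : ι) : φ (a i) + (if i ∈ S then τ else 0) ≤ ψ (a i) := by
    refine le_ciInf fun j => ?_
    have h₁ := hφ (a i) (b j)
    have h₂ := hslack i j
    split_ifs at * with hi hj hj
    all_goals first | linarith | linarith [h₂ hi hj]
  have hsum := Finset.sum_le_sum fun i (_ : i ∈ Finset.univ) => sub_le_sub (hψa i) (hψb i)
  have hlt : (N.card : ℝ) * τ < S.card * τ := by gcongr
  have hgain := hsum.trans (hmax ψ (isPotential_iInf_add htri _ b))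
  simp only [Finset.sum_sub_distrib, Finset.sum_add_distrib, Finset.sum_ite_mem,
    Finset.univ_inter, Finset.sum_const, nsmul_eq_mul] at hgain
  linarith

theorem exists_perm_isPotential_sub_eq [Finite ι] (hD : ∀ x y, 0 ≤ D x y)
    (hself : ∀ x, D x x = 0) (htri : ∀ x y z, D x z ≤ D x y + D y z) (a b : ι → X) :
    ∃ (σ : Equiv.Perm ι) (φ : X → ℝ), IsPotential D φ ∧
      ∀ i, φ (a i) - φ (b (σ i)) = D (a i) (b (σ i)) := by
  have := Fintype.ofFinite ι
  obtain ⟨φ, hφ, hmax⟩ := exists_isPotential_forall_sum_le hD a b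
  obtain ⟨f, hinj, hf⟩ := (Finset.all_card_le_biUnion_card_iff_exists_injective _).1
    (card_le_card_biUnion_tightTargets hself htri hφ hmax)
  refine ⟨Equiv.ofBijective f (Finite.injective_iff_bijective.1 hinj), φ, hφ, fun i => ?_⟩
  simpa [tightTargets] using hf i

end Duality

section Dipoles

universe u

variable {Ω : Set R2} {L : ℝ≥0} {φ : R2 → ℝ}

/-- `Lip₀(Ω)` with a prescribed Lipschitz constant. -/
def IsLip0With (L : ℝ≥0) (Ω : Set R2) (φ : R2 → ℝ) : Prop :=
  LipschitzOnWith L φ (closure Ω) ∧ ∀ p ∈ frontier Ω, φ p = 0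

/-- The pairs of points allowed in the representation of the Jacobian. -/
def IsDipole (Ω : Set R2) (x y : R2) : Prop :=
  x ∈ closure Ω ∧ y ∈ closure Ω ∧ x ≠ y ∧ (x ∈ Ω ∨ y ∈ Ω)

theorem dbar_nonneg (Ω : Set R2) (x y : R2) : 0 ≤ dbar Ω x y :=
  le_min dist_nonneg (add_nonneg infDist_nonneg infDist_nonneg)

theorem dbar_self (Ω : Set R2) (x : R2) : dbar Ω x x = 0 := by
  rw [dbar, dist_self, min_eq_left (add_nonneg infDist_nonneg infDist_nonneg)]

theorem dbar_triangle (Ω : Set R2) (x y z : R2) : dbar Ω x z ≤ dbar Ω x y + dbar Ω y z := by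
  have hxy : infDist x (frontier Ω) ≤ infDist y (frontier Ω) + dist x y :=
    infDist_le_infDist_add_dist
  have hzy : infDist z (frontier Ω) ≤ infDist y (frontier Ω) + dist z y :=
    infDist_le_infDist_add_dist
  have hy : 0 ≤ infDist y (frontier Ω) := infDist_nonneg
  have htri := dist_triangle x y z
  rw [dist_comm z y] at hzy
  unfold dbar
  rcases min_cases (dist x y) (infDist x (frontier Ω) + infDist y (frontier Ω)) with h₁ | h₁ <;>
  rcases min_cases (dist y z) (infDist y (frontier Ω) + infDist z (frontier Ω)) with h₂ | h₂ <;>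
  rw [h₁.1, h₂.1, min_le_iff] <;>
  first
  | exact Or.inl (by linarith)
  | exact Or.inr (by linarith)

theorem IsPotential.isLip0With_sub (hφ : IsPotential (dbar Ω) φ) {p₀ : R2}
    (hp₀ : p₀ ∈ frontier Ω) : IsLip0With 1 Ω fun x => φ x - φ p₀ := by
  refine ⟨LipschitzOnWith.of_le_add fun x _ y _ => ?_, fun p hp => ?_⟩
  · have := (hφ x y).trans (min_le_left _ _)
    linarith
  · have hfrontier {q r : R2} (hq : q ∈ frontier Ω) (hr : r ∈ frontier Ω) : φ q ≤ φ r := by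
      have := (hφ q r).trans (min_le_right _ _)
      rw [infDist_zero_of_mem hq, infDist_zero_of_mem hr] at this
      linarith
    exact sub_eq_zero.2 ((hfrontier hp hp₀).antisymm (hfrontier hp₀ hp))

theorem IsLip0With.abs_le (hφ : IsLip0With L Ω φ) (hne : (frontier Ω).Nonempty) {x : R2}
    (hx : x ∈ closure Ω) : |φ x| ≤ L * infDist x (frontier Ω) := by
  obtain ⟨p, hp, hdist⟩ := isClosed_frontier.exists_infDist_eq_dist hne x
  simpa [hφ.2 p hp, ← hdist] using hφ.1.dist_le_mul x hx p (frontier_subset_closure hp)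

theorem IsLip0With.abs_sub_le (hφ : IsLip0With L Ω φ) (hne : (frontier Ω).Nonempty) {x y : R2}
    (hx : x ∈ closure Ω) (hy : y ∈ closure Ω) : |φ x - φ y| ≤ L * dbar Ω x y := by
  rw [dbar, mul_min_of_nonneg _ _ L.coe_nonneg, mul_add]
  exact le_min (hφ.1.dist_le_mul x hx y hy)
    ((abs_sub _ _).trans (add_le_add (hφ.abs_le hne hx) (hφ.abs_le hne hy)))

/-- Each unit of charge of a chain is moved from or to the reservoir `p₀`. -/
theorem exists_sum_sub_eq_linearCombination {X : Type u} (c : X →₀ ℤ) (p₀ : X) :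
    ∃ (ι : Type u) (_ : Fintype ι) (a b : ι → X), (∀ i, a i ∈ insert p₀ (c.support : Set X)) ∧
      (∀ i, b i ∈ insert p₀ (c.support : Set X)) ∧
      ∀ φ : X → ℝ, φ p₀ = 0 → ∑ i, (φ (a i) - φ (b i)) = Finsupp.linearCombination ℤ φ c := by
  refine ⟨Σ x : c.support, Fin (c x).natAbs, inferInstance,
    fun i => if 0 < c i.1 then i.1 else p₀, fun i => if 0 < c i.1 then p₀ else i.1,
    fun i => ?_, fun i => ?_, fun φ hφ => ?_⟩
  · beta_reduce
    split_ifs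
    exacts [mem_insert_of_mem _ i.1.2, mem_insert _ _]
  · beta_reduce
    split_ifs
    exacts [mem_insert _ _, mem_insert_of_mem _ i.1.2]
  · rw [Fintype.sum_sigma, Finsupp.linearCombination_apply, Finsupp.sum,
      ← Finset.sum_coe_sort c.support fun x => c x • φ x]
    refine Finset.sum_congr rfl fun x _ => ?_
    simp only [Finset.sum_const, Finset.card_univ, Fintype.card_fin, nsmul_eq_mul, zsmul_eq_mul,
      Nat.cast_natAbs]
    split_ifs with hx
    · rw [abs_of_pos hx, hφ, sub_zero]
    · rw [abs_of_nonpos (not_lt.1 hx), hφ, zero_sub, Int.cast_neg, neg_mul_neg]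

theorem isDipole_of_mem_insert {p₀ x y : R2} (hp₀ : p₀ ∈ frontier Ω) (hx : x ∈ insert p₀ Ω)
    (hy : y ∈ insert p₀ Ω) (hxy : x ≠ y) : IsDipole Ω x y := by
  have hclosure : insert p₀ Ω ⊆ closure Ω :=
    insert_subset (frontier_subset_closure hp₀) subset_closure
  refine ⟨hclosure hx, hclosure hy, hxy, ?_⟩
  rcases hx with rfl | hx
  exacts [.inr (hy.resolve_left hxy.symm), .inl hx]

theorem exists_dipoles_of_chain {p₀ : R2} (hp₀ : p₀ ∈ frontier Ω) {c : R2 →₀ ℤ}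
    (hc : c ∈ Finsupp.supported ℤ ℤ Ω) :
    ∃ (ι : Type) (_ : Fintype ι) (x y : ι → R2) (φ : R2 → ℝ),
      (∀ i, IsDipole Ω (x i) (y i)) ∧ IsLip0With 1 Ω φ ∧
      ∑ i, dbar Ω (x i) (y i) = Finsupp.linearCombination ℤ φ c ∧
      ∀ ψ : R2 → ℝ, ψ p₀ = 0 →
        ∑ i, (ψ (x i) - ψ (y i)) = Finsupp.linearCombination ℤ ψ c := by
  obtain ⟨ι, _, a, b, ha, hb, hab⟩ := exists_sum_sub_eq_linearCombination c p₀
  obtain ⟨σ, φ, hφ, htight⟩ :=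
    exists_perm_isPotential_sub_eq (dbar_nonneg Ω) (dbar_self Ω) (dbar_triangle Ω) a b
  have hsupport : insert p₀ (c.support : Set R2) ⊆ insert p₀ Ω := insert_subset_insert hc
  have hmatching (ψ : R2 → ℝ) (hψ : ψ p₀ = 0) :
      ∑ i, (ψ (a i) - ψ (b (σ i))) = Finsupp.linearCombination ℤ ψ c := by
    rw [← hab ψ hψ, Finset.sum_sub_distrib, Finset.sum_sub_distrib,
      Equiv.sum_comp σ fun i => ψ (b i)]
  have hprune (f : ι → ℝ) (hf : ∀ i, a i = b (σ i) → f i = 0) :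
      ∑ i : {i // a i ≠ b (σ i)}, f i = ∑ i, f i := by
    rw [← Finset.sum_filter_of_ne fun i _ => mt (hf i),
      Finset.sum_subtype _ fun i => Finset.mem_filter_univ i]
  refine ⟨{i // a i ≠ b (σ i)}, inferInstance, fun i => a i, fun i => b (σ i),
    fun x => φ x - φ p₀,
    fun i => isDipole_of_mem_insert hp₀ (hsupport (ha i)) (hsupport (hb _)) i.2,
    hφ.isLip0With_sub hp₀, ?_, fun ψ hψ => ?_⟩
  · rw [hprune (fun i => dbar Ω (a i) (b (σ i))) fun i hi => by rw [hi, dbar_self],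
      ← hmatching _ (sub_self _)]
    exact Finset.sum_congr rfl fun i _ => by rw [sub_sub_sub_cancel_right, htight]
  · rw [hprune (fun i => ψ (a i) - ψ (b (σ i))) fun i hi => by rw [hi, sub_self],
      hmatching ψ hψ]

theorem exists_isDipole_dbar_lt (hΩo : IsOpen Ω) (hΩne : Ω.Nonempty) {δ : ℝ} (hδ : 0 < δ) :
    ∃ x y, IsDipole Ω x y ∧ dbar Ω x y < δ := by
  obtain ⟨x, hx⟩ := hΩne
  have hnear : ∀ᶠ y in 𝓝[≠] x, y ∈ Ω ∧ dist y x < δ :=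
    nhdsWithin_le_nhds ((hΩo.eventually_mem hx).and (ball_mem_nhds x hδ))
  obtain ⟨y, ⟨hyΩ, hyδ⟩, hyx⟩ := (hnear.and self_mem_nhdsWithin).exists
  exact ⟨x, y, ⟨subset_closure hx, subset_closure hyΩ, fun h => hyx h.symm, .inl hx⟩,
    (min_le_left _ _).trans_lt (dist_comm y x ▸ hyδ)⟩

theorem IsLip0With.summable_abs_sub (hφ : IsLip0With L Ω φ) (hne : (frontier Ω).Nonempty)
    {ι : Type*} {x y : ι → R2} (hdipole : ∀ i, IsDipole Ω (x i) (y i))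
    (hsum : Summable fun i => dbar Ω (x i) (y i)) : Summable fun i => |φ (x i) - φ (y i)| :=
  .of_nonneg_of_le (fun _ => abs_nonneg _)
    (fun i => hφ.abs_sub_le hne (hdipole i).1 (hdipole i).2.1) (hsum.mul_left _)

/-- Pairs of opposite short dipoles are added to make the index set infinite. -/
theorem exists_nat_dipoles (hΩo : IsOpen Ω) (hΩne : Ω.Nonempty) (hne : (frontier Ω).Nonempty)
    {ι : Type*} [Countable ι] {x y : ι → R2} (hdipole : ∀ i, IsDipole Ω (x i) (y i))
    (hsum : Summable fun i => dbar Ω (x i) (y i)) :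
    ∃ x' y' : ℕ → R2, (∀ i, IsDipole Ω (x' i) (y' i)) ∧
      (Summable fun i => dbar Ω (x' i) (y' i)) ∧
      ∀ L φ, IsLip0With L Ω φ →
        ∑' i, (φ (x' i) - φ (y' i)) = ∑' i, (φ (x i) - φ (y i)) := by
  choose p q hpq hdist using fun n : ℕ => exists_isDipole_dbar_lt hΩo hΩne (δ := (1 / 2) ^ n)
    (by positivity)
  have hqp (n : ℕ) : IsDipole Ω (q n) (p n) :=
    ⟨(hpq n).2.1, (hpq n).1, (hpq n).2.2.1.symm, (hpq n).2.2.2.symm⟩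
  have hfill : Summable fun n => dbar Ω (p n) (q n) :=
    .of_nonneg_of_le (fun n => dbar_nonneg Ω _ _) (fun n => (hdist n).le) summable_geometric_two
  have hdbar_comm (n : ℕ) : dbar Ω (p n) (q n) = dbar Ω (q n) (p n) := by
    rw [dbar, dbar, dist_comm, add_comm]
  obtain ⟨_⟩ := nonempty_denumerable (ι ⊕ (ℕ ⊕ ℕ))
  let e := (Denumerable.eqv (ι ⊕ (ℕ ⊕ ℕ))).symm
  set x' : ι ⊕ (ℕ ⊕ ℕ) → R2 := Sum.elim x (Sum.elim p q)
  set y' : ι ⊕ (ℕ ⊕ ℕ) → R2 := Sum.elim y (Sum.elim q p)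
  have hdipole' : ∀ j, IsDipole Ω (x' j) (y' j) := by
    rintro (i | n | n)
    exacts [hdipole i, hpq n, hqp n]
  have hsum' : Summable fun j => dbar Ω (x' j) (y' j) :=
    .sum _ hsum (.sum _ hfill (hfill.congr hdbar_comm))
  refine ⟨x' ∘ e, y' ∘ e, fun i => hdipole' (e i), hsum'.comp_injective e.injective,
    fun L φ hφ => ?_⟩
  have hφx := (hφ.summable_abs_sub hne hdipole hsum).of_abs.hasSum
  have hφpq := (hφ.summable_abs_sub hne hpq hfill).of_abs.hasSum
  have hφqp := hφpq.neg.congr_fun fun n => (neg_sub (φ (p n)) (φ (q n))).symm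
  have hall : HasSum (fun j => φ (x' j) - φ (y' j)) _ := hφx.sum (hφpq.sum hφqp)
  rw [add_neg_cancel, add_zero] at hall
  exact (e.hasSum_iff.2 hall).tsum_eq

theorem summable_sigma_of_forall_sum_succ_le {ι : ℕ → Type*} [∀ n, Fintype (ι n)]
    {f : (Σ n, ι n) → ℝ} (hf : ∀ i, 0 ≤ f i) {u : ℕ → ℝ} (hu : Summable u)
    (hle : ∀ n, ∑ i, f ⟨n + 1, i⟩ ≤ u n) : Summable f := by
  refine (summable_sigma_of_nonneg hf).2 ⟨fun n => .of_finite, (summable_nat_add_iff 1).1 ?_⟩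
  simp only [tsum_fintype]
  exact .of_nonneg_of_le (fun n => Finset.sum_nonneg fun i _ => hf _) hle hu

/-- Telescoping: the increments of an approximating sequence of chains are turned into dipoles,
whose lengths are summable when the approximation is fast. -/
theorem exists_countable_dipoles {p₀ : R2} (hp₀ : p₀ ∈ frontier Ω) {T : (R2 → ℝ) → ℝ}
    {c : ℕ → R2 →₀ ℤ} (hc : ∀ n, c n ∈ Finsupp.supported ℤ ℤ Ω) (hc0 : c 0 = 0)
    (happrox : ∀ n L φ, IsLip0With L Ω φ →
      |T φ - Finsupp.linearCombination ℤ φ (c (n + 1))| ≤ (1 / 2) ^ n * L) :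
    ∃ (ι : Type) (_ : Countable ι) (x y : ι → R2), (∀ i, IsDipole Ω (x i) (y i)) ∧
      (Summable fun i => dbar Ω (x i) (y i)) ∧
      ∀ L φ, IsLip0With L Ω φ → T φ = ∑' i, (φ (x i) - φ (y i)) := by
  set d : ℕ → R2 →₀ ℤ := fun n => c (n + 1) - c n
  choose ι _ x y θ hdipole hθ hcost hpair using fun n =>
    exists_dipoles_of_chain hp₀ (sub_mem (hc (n + 1)) (hc n))
  have hcost_le (n : ℕ) :
      ∑ i, dbar Ω (x (n + 1) i) (y (n + 1) i) ≤ (1 / 2) ^ (n + 1) + (1 / 2) ^ n := by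
    have h₁ := abs_le.1 (happrox (n + 1) 1 _ (hθ (n + 1)))
    have h₂ := abs_le.1 (happrox n 1 _ (hθ (n + 1)))
    rw [NNReal.coe_one, mul_one] at h₁ h₂
    rw [hcost, map_sub]
    linarith
  have hsum : Summable fun i : Σ n, ι n => dbar Ω (x i.1 i.2) (y i.1 i.2) :=
    summable_sigma_of_forall_sum_succ_le (fun _ => dbar_nonneg Ω _ _)
      (((summable_nat_add_iff 1).2 summable_geometric_two).add summable_geometric_two) hcost_le
  refine ⟨Σ n, ι n, inferInstance, fun i => x i.1 i.2, fun i => y i.1 i.2,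
    fun i => hdipole i.1 i.2, hsum, fun L φ hφ => ?_⟩
  have hφsum := (hφ.summable_abs_sub ⟨p₀, hp₀⟩ (fun i : Σ n, ι n => hdipole i.1 i.2) hsum).of_abs
  have hgroup : HasSum (fun n => Finsupp.linearCombination ℤ φ (d n)) _ :=
    hφsum.hasSum.sigma fun n => by
      rw [← hpair n φ (hφ.2 p₀ hp₀)]
      exact hasSum_fintype _
  have htelescope (n : ℕ) : ∑ m ∈ Finset.range n, Finsupp.linearCombination ℤ φ (d m) =
      Finsupp.linearCombination ℤ φ (c n) := by
    rw [← map_sum, Finset.sum_range_sub, hc0, sub_zero]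
  have hlimit : Tendsto (fun n => Finsupp.linearCombination ℤ φ (c (n + 1))) atTop (𝓝 (T φ)) := by
    have hrate : Tendsto (fun n => (1 / 2) ^ n * (L : ℝ)) atTop (𝓝 0) := by
      simpa only [zero_mul] using
        (tendsto_pow_atTop_nhds_zero_of_lt_one one_half_pos.le one_half_lt_one).mul_const (L : ℝ)
    refine tendsto_iff_dist_tendsto_zero.2 (squeeze_zero (fun _ => dist_nonneg) (fun n => ?_) hrate)
    rw [dist_comm]
    exact happrox n L φ hφ
  refine tendsto_nhds_unique hlimit ?_
  simpa only [htelescope, Function.comp_def] using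
    hgroup.tendsto_sum_nat.comp (tendsto_add_atTop_nat 1)

theorem exists_dipoles_of_forall_chain (hΩo : IsOpen Ω) (hΩne : Ω.Nonempty)
    (hne : (frontier Ω).Nonempty) {T : (R2 → ℝ) → ℝ}
    (hT : ∀ η > 0, ∃ c ∈ Finsupp.supported ℤ ℤ Ω, ∀ L φ, IsLip0With L Ω φ →
      |T φ - Finsupp.linearCombination ℤ φ c| ≤ η * L) :
    ∃ x y : ℕ → R2, (∀ i, IsDipole Ω (x i) (y i)) ∧ (Summable fun i => dbar Ω (x i) (y i)) ∧
      ∀ φ, MemLip0 Ω φ → (Summable fun i => |φ (x i) - φ (y i)|) ∧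
        T φ = ∑' i, (φ (x i) - φ (y i)) := by
  choose C hC happrox using fun n : ℕ => hT ((1 / 2) ^ n) (by positivity)
  set c : ℕ → R2 →₀ ℤ := fun n => Nat.casesOn n 0 C
  have hc (n : ℕ) : c n ∈ Finsupp.supported ℤ ℤ Ω :=
    Nat.casesOn n (zero_mem _) hC
  obtain ⟨p₀, hp₀⟩ := hne
  obtain ⟨ι, _, x, y, hdipole, hsum, hrepr⟩ := exists_countable_dipoles hp₀ hc rfl happrox
  obtain ⟨x', y', hdipole', hsum', htsum⟩ :=
    exists_nat_dipoles hΩo hΩne ⟨p₀, hp₀⟩ hdipole hsum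
  refine ⟨x', y', hdipole', hsum', fun φ ⟨⟨L, hL⟩, h0⟩ => ?_⟩
  have hφ : IsLip0With L Ω φ := ⟨hL, h0⟩
  exact ⟨hφ.summable_abs_sub ⟨p₀, hp₀⟩ hdipole' hsum', (hrepr L φ hφ).trans (htsum L φ hφ).symm⟩

end Dipoles

section Line

theorem tendsto_lintegral_enorm_sub_prod {α E : Type*} [NormedAddCommGroup E]
    {m : MeasurableSpace α} {μ : Measure α}
    {F : ℕ → α → E} {f : α → E} (hF : ∀ n, AEStronglyMeasurable (F n) μ)
    (hf : AEStronglyMeasurable f μ)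
    (h : Tendsto (fun n => ∫⁻ x, ‖F n x - f x‖ₑ ∂μ) atTop (𝓝 0)) :
    Tendsto (fun p : ℕ × ℕ => ∫⁻ x, ‖F p.1 x - F p.2 x‖ₑ ∂μ) (atTop ×ˢ atTop) (𝓝 0) := by
  have hsum := (h.comp tendsto_fst).add (h.comp (tendsto_snd (f := atTop) (g := atTop)))
  rw [add_zero] at hsum
  have hmeas : ∀ n, AEMeasurable (fun x => ‖F n x - f x‖ₑ) μ := fun n => ((hF n).sub hf).enorm
  refine tendsto_of_tendsto_of_tendsto_of_le_of_le tendsto_const_nhds hsum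
    (fun _ => zero_le) fun p => ?_
  rw [Function.comp_apply, Function.comp_apply, ← lintegral_add_left' (hmeas p.1)]
  refine lintegral_mono fun x => ?_
  simpa only [edist_eq_enorm_sub] using edist_triangle_right (F p.1 x) (F p.2 x) (f x)

variable {E : Type*} [NormedAddCommGroup E] [NormedSpace ℝ E] [CompleteSpace E]

theorem ofReal_mul_enorm_le_lintegral_add {a b : ℝ} {h h' : ℝ → E}
    (hd : ∀ x ∈ Icc a b, HasDerivAt h (h' x) x) (hi : IntegrableOn h' (Ioc a b))
    {x : ℝ} (hx : x ∈ Icc a b) :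
    ENNReal.ofReal (b - a) * ‖h x‖ₑ ≤
      (∫⁻ y in Ioc a b, ‖h y‖ₑ) + ENNReal.ofReal (b - a) * ∫⁻ y in Ioc a b, ‖h' y‖ₑ := by
  have hpoint : ∀ y ∈ Ioc a b, ‖h x‖ₑ ≤ ‖h y‖ₑ + ∫⁻ z in Ioc a b, ‖h' z‖ₑ := by
    intro y hy
    have hyx : uIcc y x ⊆ Icc a b := uIcc_subset_Icc (Ioc_subset_Icc_self hy) hx
    have hsub : uIoc y x ⊆ Ioc a b := fun z hz =>
      ⟨(lt_of_le_of_lt (le_inf hy.1.le hx.1) hz.1), hz.2.trans (sup_le hy.2 hx.2)⟩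
    have hint : IntervalIntegrable h' volume y x :=
      intervalIntegrable_iff.2 (hi.mono_set hsub)
    have hFTC : ∫ z in y..x, h' z = h x - h y :=
      intervalIntegral.integral_eq_sub_of_hasDerivAt (fun z hz => hd z (hyx hz)) hint
    calc ‖h x‖ₑ = ‖h y + ∫ z in y..x, h' z‖ₑ := by rw [hFTC, add_sub_cancel]
      _ ≤ ‖h y‖ₑ + ‖∫ z in y..x, h' z‖ₑ := enorm_add_le _ _
      _ = ‖h y‖ₑ + ‖∫ z in uIoc y x, h' z‖ₑ := by
        rw [← enorm_norm (∫ z in y..x, h' z),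
          intervalIntegral.norm_intervalIntegral_eq, enorm_norm]
      _ ≤ ‖h y‖ₑ + ∫⁻ z in Ioc a b, ‖h' z‖ₑ := by
        gcongr
        exact (enorm_integral_le_lintegral_enorm _).trans (lintegral_mono_set hsub)
  calc ENNReal.ofReal (b - a) * ‖h x‖ₑ = ∫⁻ _ in Ioc a b, ‖h x‖ₑ := by
        rw [setLIntegral_const, Real.volume_Ioc, mul_comm]
    _ ≤ ∫⁻ y in Ioc a b, (‖h y‖ₑ + ∫⁻ z in Ioc a b, ‖h' z‖ₑ) :=
        setLIntegral_mono' measurableSet_Ioc hpoint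
    _ = _ := by
        rw [lintegral_add_right _ measurable_const, setLIntegral_const, Real.volume_Ioc, mul_comm]

theorem exists_tendstoUniformlyOn_Icc {a b : ℝ} (hab : a < b) {F F' : ℕ → ℝ → E} {f g : ℝ → E}
    (hF : ∀ n, AEStronglyMeasurable (F n) (volume.restrict (Ioc a b)))
    (hF' : ∀ n, IntegrableOn (F' n) (Ioc a b))
    (hd : ∀ᶠ n in atTop, ∀ x ∈ Icc a b, HasDerivAt (F n) (F' n x) x)
    (hf : AEStronglyMeasurable f (volume.restrict (Ioc a b)))
    (hg : AEStronglyMeasurable g (volume.restrict (Ioc a b)))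
    (hFf : Tendsto (fun n => ∫⁻ x in Ioc a b, ‖F n x - f x‖ₑ) atTop (𝓝 0))
    (hFg : Tendsto (fun n => ∫⁻ x in Ioc a b, ‖F' n x - g x‖ₑ) atTop (𝓝 0)) :
    ∃ w : ℝ → E, TendstoUniformlyOn F w atTop (Icc a b) ∧ ContinuousOn w (Icc a b) ∧
      w =ᵐ[volume.restrict (Ioc a b)] f := by
  have hCauchy : UniformCauchySeqOn F atTop (Icc a b) := by
    have hlim := ((tendsto_lintegral_enorm_sub_prod hF hf hFf).add
      (ENNReal.Tendsto.const_mul (tendsto_lintegral_enorm_sub_prod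
        (fun n => (hF' n).aestronglyMeasurable) hg hFg)
        (Or.inr ENNReal.ofReal_ne_top : _ ∨ ENNReal.ofReal (b - a) ≠ ⊤)))
    rw [mul_zero, add_zero] at hlim
    intro U hU
    obtain ⟨ε, hε, hεU⟩ := mem_uniformity_edist.1 hU
    have hpos : 0 < ENNReal.ofReal (b - a) * ε :=
      ENNReal.mul_pos (by simpa using hab) hε.ne'
    filter_upwards [hlim.eventually_lt_const hpos, hd.prod_mk hd] with p hp hdp x hx
    refine hεU ?_
    rw [edist_eq_enorm_sub]
    exact lt_of_mul_lt_mul_left' ((ofReal_mul_enorm_le_lintegral_add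
      (fun y hy => (hdp.1 y hy).sub (hdp.2 y hy)) ((hF' p.1).sub (hF' p.2)) hx).trans_lt hp)
  have hpw : ∀ x, ∃ w, x ∈ Icc a b → Tendsto (fun n => F n x) atTop (𝓝 w) := fun x => by
    by_cases hx : x ∈ Icc a b
    · obtain ⟨w, hw⟩ := cauchySeq_tendsto_of_complete (hCauchy.cauchySeq hx)
      exact ⟨w, fun _ => hw⟩
    · exact ⟨0, fun h => absurd h hx⟩
  choose w hw using hpw
  have hFw := hCauchy.tendstoUniformlyOn_of_tendsto hw
  refine ⟨w, hFw, hFw.continuousOn (hd.mono fun n hn x hx =>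
    (hn x hx).continuousAt.continuousWithinAt).frequently, ?_⟩
  refine tendstoInMeasure_ae_unique (tendstoInMeasure_of_tendsto_ae hF ?_)
    (tendstoInMeasure_of_tendsto_eLpNorm one_ne_zero hF hf ?_)
  · exact (ae_restrict_mem measurableSet_Ioc).mono fun x hx => hw x (Ioc_subset_Icc_self hx)
  · simpa only [eLpNorm_one_eq_lintegral_enorm, Pi.sub_apply] using hFf

theorem eq_mul_exp_integral_div {a b : ℝ} (hab : a ≤ b) {F F' : ℝ → ℂ}
    (hF' : ContinuousOn F' (Icc a b)) (hd : ∀ x ∈ Icc a b, HasDerivAt F (F' x) x)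
    (h0 : ∀ x ∈ Icc a b, F x ≠ 0) :
    F b = F a * Complex.exp (∫ x in a..b, F' x / F x) := by
  have hF : ContinuousOn F (Icc a b) := fun x hx => (hd x hx).continuousAt.continuousWithinAt
  have hq : ContinuousOn (fun x => F' x / F x) (Icc a b) := hF'.div hF h0
  have hprim : ∀ x ∈ Icc a b, HasDerivWithinAt (fun y => ∫ t in a..y, F' t / F t)
      (F' x / F x) (Icc a b) x := by
    intro x hx
    have := Fact.mk hx
    refine intervalIntegral.integral_hasDerivWithinAt_right ?_
      (hq.stronglyMeasurableAtFilter_nhdsWithin measurableSet_Icc x) (hq x hx)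
    refine ContinuousOn.intervalIntegrable ?_
    rw [uIcc_of_le hx.1]
    exact hq.mono (Icc_subset_Icc_right hx.2)
  have hconst : ∀ x ∈ Icc a b, HasDerivWithinAt
      (fun y => F y * Complex.exp (-(∫ t in a..y, F' t / F t))) 0 (Icc a b) x := by
    intro x hx
    refine ((hd x hx).hasDerivWithinAt.mul (hprim x hx).neg.cexp).congr_deriv ?_
    have := mul_div_cancel₀ (F' x) (h0 x hx)
    linear_combination (-Complex.exp (-(∫ t in a..x, F' t / F t))) * this
  have heq := constant_of_has_deriv_right_zero
    (fun x hx => (hconst x hx).continuousWithinAt)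
    (fun x hx => (hconst x (Ico_subset_Icc_self hx)).mono_of_mem_nhdsWithin
      (Icc_mem_nhdsGE_of_mem hx)) b ⟨hab, le_rfl⟩
  simp only [intervalIntegral.integral_same, neg_zero, Complex.exp_zero, mul_one] at heq
  rw [← heq, mul_assoc, ← Complex.exp_add, neg_add_cancel, Complex.exp_zero, mul_one]

theorem tendsto_integral_mul_of_bound {α 𝕜 : Type*} [RCLike 𝕜] {m : MeasurableSpace α}
    {μ : Measure α} {K G : ℕ → α → 𝕜} {k g : α → 𝕜} {C : ℝ≥0}
    (hK : ∀ n, AEStronglyMeasurable (K n) μ) (hKC : ∀ᶠ n in atTop, ∀ᵐ x ∂μ, ‖K n x‖₊ ≤ C)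
    (hKk : ∀ᵐ x ∂μ, Tendsto (fun n => K n x) atTop (𝓝 (k x)))
    (hG : ∀ n, Integrable (G n) μ) (hg : Integrable g μ)
    (hGg : Tendsto (fun n => ∫⁻ x, ‖G n x - g x‖ₑ ∂μ) atTop (𝓝 0)) :
    Tendsto (fun n => ∫ x, K n x * G n x ∂μ) atTop (𝓝 (∫ x, k x * g x ∂μ)) := by
  have hmain : Tendsto (fun n => ∫ x, K n x * g x ∂μ) atTop (𝓝 (∫ x, k x * g x ∂μ)) := by
    refine tendsto_integral_filter_of_dominated_convergence (fun x => C * ‖g x‖)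
      (Eventually.of_forall fun n => (hK n).mul hg.aestronglyMeasurable) ?_
      (hg.norm.const_mul _) (hKk.mono fun x hx => hx.mul_const _)
    filter_upwards [hKC] with n hn
    filter_upwards [hn] with x hx
    rw [norm_mul]
    gcongr
    exact_mod_cast hx
  have hGgi : ∀ n, Integrable (fun x => G n x - g x) μ := fun n => (hG n).sub hg
  have herr : Tendsto (fun n => ∫ x, K n x * (G n x - g x) ∂μ) atTop (𝓝 0) := by
    rw [tendsto_zero_iff_enorm_tendsto_zero]
    have hC : Tendsto (fun n => (C : ℝ≥0∞) * ∫⁻ x, ‖G n x - g x‖ₑ ∂μ) atTop (𝓝 0) := by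
      simpa only [mul_zero] using ENNReal.Tendsto.const_mul hGg (Or.inr ENNReal.coe_ne_top)
    refine tendsto_of_tendsto_of_tendsto_of_le_of_le' tendsto_const_nhds hC
      (Eventually.of_forall fun _ => zero_le) ?_
    filter_upwards [hKC] with n hn
    rw [← lintegral_const_mul'' _ (hGgi n).aestronglyMeasurable.enorm]
    refine (enorm_integral_le_lintegral_enorm _).trans (lintegral_mono_ae ?_)
    filter_upwards [hn] with x hx
    rw [enorm_mul]
    gcongr
    exact_mod_cast hx
  rw [← add_zero (∫ x, k x * g x ∂μ)]
  refine (hmain.add herr).congr' ?_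
  filter_upwards [hKC] with n hn
  have hbdd : ∀ᵐ x ∂μ, ‖K n x‖ ≤ C := hn.mono fun x hx => by exact_mod_cast hx
  rw [← integral_add (hg.bdd_mul (hK n) hbdd) ((hGgi n).bdd_mul (hK n) hbdd)]
  exact integral_congr_ae (.of_forall fun x => by ring)

/-- The endpoint limits are the boundary values of the absolutely continuous representative of
`f`, whose modulus is `1` everywhere, so that the logarithmic derivatives `F' n / F n` converge
in `L¹` to `conj f * g`. -/
theorem exists_tendsto_endpoints_eq_mul_exp {a b : ℝ} (hab : a < b) {F F' : ℕ → ℝ → ℂ}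
    {f g : ℝ → ℂ} (hF : ∀ n, Continuous (F n)) (hF' : ∀ n, Continuous (F' n))
    (hd : ∀ᶠ n in atTop, ∀ x ∈ Icc a b, HasDerivAt (F n) (F' n x) x)
    (hf : AEStronglyMeasurable f (volume.restrict (Ioc a b))) (hg : IntegrableOn g (Ioc a b))
    (hFf : Tendsto (fun n => ∫⁻ x in Ioc a b, ‖F n x - f x‖ₑ) atTop (𝓝 0))
    (hFg : Tendsto (fun n => ∫⁻ x in Ioc a b, ‖F' n x - g x‖ₑ) atTop (𝓝 0))
    (hf1 : ∀ᵐ x ∂volume.restrict (Ioc a b), ‖f x‖ = 1) :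
    ∃ wa wb : ℂ, Tendsto (fun n => F n a) atTop (𝓝 wa) ∧ Tendsto (fun n => F n b) atTop (𝓝 wb) ∧
      wa ≠ 0 ∧ wb = wa * Complex.exp (∫ x in a..b, (starRingEnd ℂ) (f x) * g x) := by
  have hF'i : ∀ n, IntegrableOn (F' n) (Ioc a b) := fun n => (hF' n).integrableOn_Ioc
  obtain ⟨w, hFw, hwc, hwf⟩ := exists_tendstoUniformlyOn_Icc hab
    (fun n => (hF n).aestronglyMeasurable) hF'i hd hf hg.aestronglyMeasurable hFf hFg
  have hw1 : EqOn (fun x => ‖w x‖) (fun _ => (1 : ℝ)) (Icc a b) := by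
    refine Measure.eqOn_Icc_of_ae_eq volume hab.ne ?_ hwc.norm continuousOn_const
    rw [← restrict_Ioc_eq_restrict_Icc]
    filter_upwards [hwf, hf1] with x hx hx1
    rw [hx, hx1]
  have hlim : ∀ x ∈ Icc a b, Tendsto (fun n => F n x) atTop (𝓝 (w x)) := fun x hx =>
    hFw.tendsto_at hx
  have hw0 : ∀ x ∈ Icc a b, w x ≠ 0 := fun x hx => norm_ne_zero_iff.1 (by simp [hw1 hx])
  have hhalf : ∀ᶠ n in atTop, ∀ x ∈ Icc a b, 1 / 2 ≤ ‖F n x‖ := by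
    filter_upwards [Metric.tendstoUniformlyOn_iff.1 hFw (1 / 2) (by norm_num)] with n hn x hx
    have hdist := hn x hx
    have htri := norm_sub_norm_le (w x) (F n x)
    rw [dist_eq_norm] at hdist
    have hone : ‖w x‖ = 1 := hw1 hx
    linarith
  have hint : Tendsto (fun n => ∫ x in a..b, F' n x / F n x) atTop
      (𝓝 (∫ x in a..b, (starRingEnd ℂ) (f x) * g x)) := by
    simp only [intervalIntegral.integral_of_le hab.le, div_eq_inv_mul]
    refine tendsto_integral_mul_of_bound (C := 2)
      (fun n => (hF n).measurable.inv.aestronglyMeasurable) ?_ ?_ hF'i hg hFg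
    · filter_upwards [hhalf] with n hn
      filter_upwards [ae_restrict_mem measurableSet_Ioc] with x hx
      rw [nnnorm_inv, ← NNReal.coe_le_coe]
      simpa using inv_anti₀ (by norm_num) (hn x (Ioc_subset_Icc_self hx))
    · filter_upwards [ae_restrict_mem measurableSet_Ioc, hwf, hf1] with x hx hwfx hf1x
      rw [← RCLike.inv_eq_conj hf1x, ← hwfx]
      exact (hlim x (Ioc_subset_Icc_self hx)).inv₀ (hw0 x (Ioc_subset_Icc_self hx))
  have ha := left_mem_Icc.2 hab.le
  have hb := right_mem_Icc.2 hab.le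
  refine ⟨w a, w b, hlim a ha, hlim b hb, hw0 a ha, tendsto_nhds_unique (hlim b hb) ?_⟩
  refine ((hlim a ha).mul ((Complex.continuous_exp.tendsto _).comp hint)).congr' ?_
  filter_upwards [hhalf, hd] with n hn hdn
  refine (eq_mul_exp_integral_div hab.le (hF' n).continuousOn hdn fun x hx => ?_).symm
  exact norm_ne_zero_iff.1 (lt_of_lt_of_le (by norm_num) (hn x hx)).ne'

end Line

section Mollification

theorem exists_seq_tendsto_tsum_ne_top {α ι : Type*} [Finite ι] {l : Filter α} [NeBot l]
    [l.IsCountablyGenerated] {a : ι → α → ℝ≥0∞} (ha : ∀ i, Tendsto (a i) l (𝓝 0)) :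
    ∃ x : ℕ → α, Tendsto x atTop l ∧ ∀ i, ∑' n, a i (x n) ≠ ∞ := by
  obtain ⟨s, hs⟩ := l.exists_antitone_basis
  obtain ⟨ε, hε, hεsum⟩ := ENNReal.exists_pos_sum_of_countable' one_ne_zero ℕ
  have hex : ∀ n, ∃ x, x ∈ s n ∧ ∀ i, a i x < ε n := fun n =>
    ((eventually_mem_set.2 (hs.mem n)).and
      (eventually_all.2 fun i => (ha i).eventually_lt_const (hε n))).exists
  choose x hxs hxa using hex
  refine ⟨x, hs.tendsto hxs, fun i => ne_top_of_le_ne_top (hεsum.trans ENNReal.one_lt_top).ne ?_⟩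
  exact ENNReal.tsum_le_tsum fun n => (hxa n i).le

theorem ae_tendsto_lintegral_prod {α β : Type*} [MeasurableSpace α] [MeasurableSpace β]
    {μ : Measure α} {ν : Measure β} [SFinite μ] [SFinite ν] {h : ℕ → α × β → ℝ≥0∞}
    (hm : ∀ n, AEMeasurable (h n) (μ.prod ν)) (hs : ∑' n, ∫⁻ z, h n z ∂μ.prod ν ≠ ∞) :
    ∀ᵐ x ∂μ, Tendsto (fun n => ∫⁻ y, h n (x, y) ∂ν) atTop (𝓝 0) := by
  have hml : ∀ n, AEMeasurable (fun x => ∫⁻ y, h n (x, y) ∂ν) μ := fun n =>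
    (hm n).lintegral_prod_right'
  have hfin : ∫⁻ x, ∑' n, ∫⁻ y, h n (x, y) ∂ν ∂μ ≠ ∞ := by
    rwa [lintegral_tsum hml, ← tsum_congr fun n => lintegral_prod _ (hm n)]
  filter_upwards [ae_lt_top' (AEMeasurable.tsum hml) hfin] with x hx
  exact ENNReal.tendsto_atTop_zero_of_tsum_ne_top hx.ne

theorem ae_tendsto_lintegral_prod_symm {α β : Type*} [MeasurableSpace α] [MeasurableSpace β]
    {μ : Measure α} {ν : Measure β} [SFinite μ] [SFinite ν] {h : ℕ → α × β → ℝ≥0∞}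
    (hm : ∀ n, AEMeasurable (h n) (μ.prod ν)) (hs : ∑' n, ∫⁻ z, h n z ∂μ.prod ν ≠ ∞) :
    ∀ᵐ y ∂ν, Tendsto (fun n => ∫⁻ x, h n (x, y) ∂μ) atTop (𝓝 0) :=
  ae_tendsto_lintegral_prod (h := fun n z => h n z.swap) (fun n => (hm n).prod_swap)
    (by rwa [tsum_congr fun n => lintegral_prod_swap (h n)])

variable {E F : Type*} [NormedAddCommGroup E] [NormedSpace ℝ E] [FiniteDimensional ℝ E]
  [MeasurableSpace E] [NormedAddCommGroup F] [NormedSpace ℝ F]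

/-- The mollification of `f`: its convolution with the normalized bump function `φ`. -/
def mollify (φ : ContDiffBump (0 : E)) (μ : Measure E) (f : E → F) : E → F :=
  convolution (φ.normed μ) f (ContinuousLinearMap.lsmul ℝ ℝ) μ

theorem mollify_apply (φ : ContDiffBump (0 : E)) (μ : Measure E) (f : E → F) (x : E) :
    mollify φ μ f x = ∫ t, φ.normed μ t • f (x - t) ∂μ := rfl

variable [BorelSpace E] {μ : Measure E} [μ.IsAddHaarMeasure] (φ : ContDiffBump (0 : E))
  {f g : E → F}

theorem continuous_mollify (hf : LocallyIntegrable f μ) : Continuous (mollify φ μ f) :=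
  φ.hasCompactSupport_normed.continuous_convolution_left _ φ.continuous_normed hf

theorem aemeasurable_enorm_mollify_sub (hf : Integrable f μ) :
    AEMeasurable (fun x => ‖mollify φ μ f x - f x‖ₑ) μ :=
  ((continuous_mollify φ hf.locallyIntegrable).aestronglyMeasurable.sub
    hf.aestronglyMeasurable).enorm

theorem contDiff_mollify [CompleteSpace F] (hf : LocallyIntegrable f μ) :
    ContDiff ℝ (⊤ : ℕ∞) (mollify φ μ f) :=
  φ.hasCompactSupport_normed.contDiff_convolution_left _ φ.contDiff_normed hf

theorem mollify_sub (hf : LocallyIntegrable f μ) (hg : LocallyIntegrable g μ) :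
    mollify φ μ (fun x => f x - g x) = fun x => mollify φ μ f x - mollify φ μ g x := by
  have hex : ∀ {h : E → F}, LocallyIntegrable h μ → ∀ x,
      Integrable (fun t => φ.normed μ t • h (x - t)) μ := fun hh x =>
    φ.hasCompactSupport_normed.convolutionExists_left (ContinuousLinearMap.lsmul ℝ ℝ)
      φ.continuous_normed hh x
  funext x
  simp only [mollify_apply, smul_sub]
  exact integral_sub (hex hf x) (hex hg x)

theorem lintegral_enorm_mollify_le (hf : AEStronglyMeasurable f μ) :
    ∫⁻ x, ‖mollify φ μ f x‖ₑ ∂μ ≤ ∫⁻ x, ‖f x‖ₑ ∂μ := by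
  have hmeas : AEMeasurable (fun p : E × E => ‖φ.normed μ p.2‖ₑ * ‖f (p.1 - p.2)‖ₑ)
      (μ.prod μ) :=
    (φ.continuous_normed.comp continuous_snd).enorm.measurable.aemeasurable.mul
      (hf.comp_quasiMeasurePreserving
        (quasiMeasurePreserving_sub_of_right_invariant μ μ)).enorm
  have hone : ∫⁻ t, ‖φ.normed μ t‖ₑ ∂μ = 1 := by
    rw [← ofReal_integral_norm_eq_lintegral_enorm φ.integrable_normed]
    simp only [Real.norm_of_nonneg (φ.nonneg_normed _), φ.integral_normed, ENNReal.ofReal_one]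
  calc ∫⁻ x, ‖mollify φ μ f x‖ₑ ∂μ ≤ ∫⁻ x, ∫⁻ t, ‖φ.normed μ t‖ₑ * ‖f (x - t)‖ₑ ∂μ ∂μ := by
        simp only [← enorm_smul]
        exact lintegral_mono fun x => enorm_integral_le_lintegral_enorm _
    _ = ∫⁻ t, ∫⁻ x, ‖φ.normed μ t‖ₑ * ‖f (x - t)‖ₑ ∂μ ∂μ := lintegral_lintegral_swap hmeas
    _ = ∫⁻ t, ‖φ.normed μ t‖ₑ * ∫⁻ x, ‖f x‖ₑ ∂μ ∂μ := by
        refine lintegral_congr fun t => ?_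
        rw [lintegral_const_mul' _ _ enorm_ne_top,
          lintegral_sub_right_eq_self (fun x => ‖f x‖ₑ) t]
    _ = ∫⁻ x, ‖f x‖ₑ ∂μ := by
        rw [lintegral_mul_const _ φ.continuous_normed.enorm.measurable, hone, one_mul]

theorem mollify_eq_zero_of_notMem_thickening {s : Set E} (hs : ∀ x ∉ s, f x = 0) {x : E}
    (hx : x ∉ thickening φ.rOut s) : mollify φ μ f x = 0 := by
  rw [mollify_apply]
  refine integral_eq_zero_of_ae (.of_forall fun t => ?_)
  by_cases ht : ‖t‖ < φ.rOut
  · have hxt : f (x - t) = 0 := hs _ fun hmem =>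
      hx (mem_thickening_iff.2 ⟨x - t, hmem, by simpa [dist_eq_norm] using ht⟩)
    simp only [hxt, smul_zero, Pi.zero_apply]
  · have hsupp : t ∉ Function.support (φ.normed μ) := by
      rwa [φ.support_normed_eq, mem_ball_zero_iff]
    simp only [Function.notMem_support.1 hsupp, zero_smul, Pi.zero_apply]

variable {ι : Type*} {l : Filter ι} {φ : ι → ContDiffBump (0 : E)}

theorem tendsto_lintegral_enorm_mollify_sub_of_hasCompactSupport [CompleteSpace F]
    (hφ : Tendsto (fun i => (φ i).rOut) l (𝓝 0)) (hf : Continuous f) (hfc : HasCompactSupport f) :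
    Tendsto (fun i => ∫⁻ x, ‖mollify (φ i) μ f x - f x‖ₑ ∂μ) l (𝓝 0) := by
  set K : Set E := cthickening 1 (tsupport f)
  have hK : IsCompact K := hfc.isCompact.cthickening
  have hzero : ∀ᶠ i in l, ∀ x ∉ K, ‖mollify (φ i) μ f x - f x‖ₑ = 0 := by
    filter_upwards [hφ.eventually_lt_const one_pos] with i hi x hx
    have hfx : f x = 0 := image_eq_zero_of_notMem_tsupport fun h =>
      hx (self_subset_cthickening _ h)
    rw [hfx, sub_zero, enorm_eq_zero]
    exact mollify_eq_zero_of_notMem_thickening _ (fun y => image_eq_zero_of_notMem_tsupport)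
      fun h => hx ((thickening_subset_cthickening _ _).trans (cthickening_mono hi.le _) h)
  rw [ENNReal.tendsto_nhds_zero]
  intro ε hε
  obtain ⟨δ, hδ, hδε⟩ : ∃ δ : ℝ≥0, 0 < δ ∧ δ * μ K < ε :=
    ENNReal.exists_nnreal_pos_mul_lt hK.measure_lt_top.ne hε.ne'
  obtain ⟨r, hr, hunif⟩ := Metric.uniformContinuous_iff.1
    (hfc.uniformContinuous_of_continuous hf) δ hδ
  filter_upwards [hzero, hφ.eventually_lt_const hr] with i hi hir
  have hclose : ∀ x, ‖mollify (φ i) μ f x - f x‖ₑ ≤ δ := fun x => by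
    rw [← edist_eq_enorm_sub, edist_le_coe, ← NNReal.coe_le_coe, coe_nndist]
    exact (φ i).dist_normed_convolution_le hf.aestronglyMeasurable fun y hy =>
      (hunif ((mem_ball.1 hy).trans hir)).le
  calc ∫⁻ x, ‖mollify (φ i) μ f x - f x‖ₑ ∂μ = ∫⁻ x in K, ‖mollify (φ i) μ f x - f x‖ₑ ∂μ := by
        refine (setLIntegral_eq_of_support_subset fun x hx => ?_).symm
        by_contra hxK
        exact hx (hi x hxK)
    _ ≤ ∫⁻ _ in K, δ ∂μ := lintegral_mono hclose
    _ ≤ ε := by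
        rw [setLIntegral_const]
        exact hδε.le

theorem tendsto_lintegral_enorm_mollify_sub [CompleteSpace F]
    (hφ : Tendsto (fun i => (φ i).rOut) l (𝓝 0)) (hf : Integrable f μ) :
    Tendsto (fun i => ∫⁻ x, ‖mollify (φ i) μ f x - f x‖ₑ ∂μ) l (𝓝 0) := by
  rw [ENNReal.tendsto_nhds_zero]
  intro ε hε
  have hε3 : 0 < ε / 3 := ENNReal.div_pos hε.ne' (by norm_num)
  obtain ⟨g, hgc, hfg, hg, hgi⟩ := hf.exists_hasCompactSupport_lintegral_sub_le hε3.ne'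
  have hgε := (ENNReal.tendsto_nhds_zero.1
    (tendsto_lintegral_enorm_mollify_sub_of_hasCompactSupport (μ := μ) hφ hg hgc)) _ hε3
  filter_upwards [hgε] with i hi
  have hmol : Continuous (mollify (φ i) μ fun x => f x - g x) :=
    continuous_mollify _ (hf.sub hgi).locallyIntegrable
  have hmolg : Continuous (fun x => mollify (φ i) μ g x - g x) :=
    (continuous_mollify _ hgi.locallyIntegrable).sub hg
  have hmeas : Measurable fun x => ‖mollify (φ i) μ (fun x => f x - g x) x‖ₑ
      + ‖mollify (φ i) μ g x - g x‖ₑ := (hmol.enorm.add hmolg.enorm).measurable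
  calc ∫⁻ x, ‖mollify (φ i) μ f x - f x‖ₑ ∂μ
      ≤ ∫⁻ x, (‖mollify (φ i) μ (fun x => f x - g x) x‖ₑ + ‖mollify (φ i) μ g x - g x‖ₑ
          + ‖f x - g x‖ₑ) ∂μ := by
        refine lintegral_mono fun x => ?_
        have hsplit : mollify (φ i) μ f x - f x = mollify (φ i) μ (fun x => f x - g x) x
            + (mollify (φ i) μ g x - g x) - (f x - g x) := by
          rw [mollify_sub _ hf.locallyIntegrable hgi.locallyIntegrable]
          beta_reduce
          abel
        rw [hsplit]
        exact enorm_sub_le.trans (by gcongr; exact enorm_add_le _ _)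
    _ = (∫⁻ x, ‖mollify (φ i) μ (fun x => f x - g x) x‖ₑ ∂μ)
          + (∫⁻ x, ‖mollify (φ i) μ g x - g x‖ₑ ∂μ) + ∫⁻ x, ‖f x - g x‖ₑ ∂μ := by
        rw [lintegral_add_left hmeas, lintegral_add_left hmol.enorm.measurable]
    _ ≤ ε / 3 + ε / 3 + ε / 3 := by
        gcongr
        exact (lintegral_enorm_mollify_le _ (hf.sub hgi).aestronglyMeasurable).trans hfg
    _ = ε := ENNReal.add_thirds ε

theorem exists_seq_contDiffBump_tsum_ne_top [CompleteSpace F] {κ : Type*} [Finite κ]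
    {f : κ → E → F} (hf : ∀ k, Integrable (f k) μ) :
    ∃ φ : ℕ → ContDiffBump (0 : E), Tendsto (fun n => (φ n).rOut) atTop (𝓝 0) ∧
      ∀ k, ∑' n, ∫⁻ x, ‖mollify (φ n) μ (f k) x - f k x‖ₑ ∂μ ≠ ∞ := by
  have : NeBot (comap (ContDiffBump.rOut (c := (0 : E))) (𝓝 0)) := by
    refine comap_neBot fun s hs => ?_
    obtain ⟨r, hr, hrs⟩ := Metric.mem_nhds_iff.1 hs
    refine ⟨⟨r / 4, r / 2, by linarith, by linarith⟩, hrs ?_⟩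
    rw [mem_ball_zero_iff, Real.norm_of_nonneg (by positivity)]
    linarith
  obtain ⟨φ, hφ, hsum⟩ := exists_seq_tendsto_tsum_ne_top
    fun k => tendsto_lintegral_enorm_mollify_sub (μ := μ)
      (tendsto_comap (f := ContDiffBump.rOut (c := (0 : E))) (x := 𝓝 0)) (hf k)
  exact ⟨φ, tendsto_comap_iff.1 hφ, hsum⟩

theorem exists_contDiff_lintegral_enorm_sub_le [CompleteSpace F] {Ω : Set E} (hΩ : IsOpen Ω)
    (hf : Integrable f μ) (hfΩ : ∀ x ∉ Ω, f x = 0) {η : ℝ≥0∞} (hη : η ≠ 0) :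
    ∃ g : E → F, ContDiff ℝ (⊤ : ℕ∞) g ∧ HasCompactSupport g ∧ tsupport g ⊆ Ω ∧
      ∫⁻ x, ‖f x - g x‖ₑ ∂μ ≤ η := by
  have : IsFiniteMeasure (μ.withDensity fun x => ‖f x‖ₑ) :=
    isFiniteMeasure_withDensity hf.hasFiniteIntegral.ne
  obtain ⟨K, hKΩ, hK, hKη⟩ := hΩ.measurableSet.exists_isCompact_sdiff_lt
    (μ := μ.withDensity fun x => ‖f x‖ₑ) (measure_ne_top _ _) (ENNReal.half_pos hη).ne'
  rw [withDensity_apply _ (hΩ.measurableSet.diff hK.measurableSet)] at hKη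
  obtain ⟨δ, hδ, hδΩ⟩ := hK.exists_cthickening_subset_open hΩ hKΩ
  have hfK : Integrable (K.indicator f) μ := hf.indicator hK.measurableSet
  obtain ⟨φ, hφ, hφsum⟩ := exists_seq_contDiffBump_tsum_ne_top (κ := Unit) fun _ => hfK
  obtain ⟨n, hnδ, hnη⟩ := ((hφ.eventually_lt_const hδ).and
    ((ENNReal.tendsto_atTop_zero_of_tsum_ne_top (hφsum ())).eventually_lt_const
      (ENNReal.half_pos hη))).exists
  have hsupp : tsupport (mollify (φ n) μ (K.indicator f)) ⊆ cthickening δ K := by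
    refine closure_minimal (fun x hx => ?_) isClosed_cthickening
    by_contra hxK
    exact hx (mollify_eq_zero_of_notMem_thickening _ (fun y hy => indicator_of_notMem hy f)
      fun h => hxK ((thickening_subset_cthickening _ _).trans (cthickening_mono hnδ.le _) h))
  have hdiff : (fun x => ‖f x - K.indicator f x‖ₑ) = (Ω \ K).indicator fun x => ‖f x‖ₑ := by
    funext x
    by_cases hxK : x ∈ K
    · simp [hxK]
    · by_cases hxΩ : x ∈ Ω <;> simp [hxK, hxΩ, hfΩ]
  refine ⟨_, contDiff_mollify (φ n) hfK.locallyIntegrable,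
    HasCompactSupport.of_support_subset_isCompact hK.cthickening
      ((subset_tsupport _).trans hsupp), hsupp.trans hδΩ, ?_⟩
  have hmeas : AEMeasurable (fun x => ‖f x - K.indicator f x‖ₑ) μ :=
    (hf.sub hfK).aestronglyMeasurable.enorm
  calc ∫⁻ x, ‖f x - mollify (φ n) μ (K.indicator f) x‖ₑ ∂μ
      ≤ ∫⁻ x, (‖f x - K.indicator f x‖ₑ
          + ‖mollify (φ n) μ (K.indicator f) x - K.indicator f x‖ₑ) ∂μ :=
        lintegral_mono fun x => by
          simpa only [edist_eq_enorm_sub] using edist_triangle_right _ _ (K.indicator f x)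
    _ = (∫⁻ x in Ω \ K, ‖f x‖ₑ ∂μ)
          + ∫⁻ x, ‖mollify (φ n) μ (K.indicator f) x - K.indicator f x‖ₑ ∂μ := by
        rw [lintegral_add_left' hmeas, hdiff,
          lintegral_indicator (hΩ.measurableSet.diff hK.measurableSet)]
    _ ≤ η / 2 + η / 2 := add_le_add hKη.le hnη.le
    _ = η := ENNReal.add_halves η

/-- `g` is a weak derivative of `u` in the direction `v` on `Ω`. Test functions are supported in
`Ω`, so both integrals only see the values of `u` and `g` there. -/
def HasWeakDirDeriv (Ω : Set E) (μ : Measure E) (v : E) (u g : E → F) : Prop :=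
  ∀ φ : E → ℝ, ContDiff ℝ (⊤ : ℕ∞) φ → HasCompactSupport φ → tsupport φ ⊆ Ω →
    ∫ x, fderiv ℝ φ x v • u x ∂μ = -∫ x, φ x • g x ∂μ

theorem HasWeakDirDeriv.integral_fderiv_normed_smul {Ω : Set E} {v : E}
    (hw : HasWeakDirDeriv Ω μ v f g) (φ : ContDiffBump (0 : E)) {x : E}
    (hx : closedBall x φ.rOut ⊆ Ω) :
    ∫ t, fderiv ℝ (φ.normed μ) t v • f (x - t) ∂μ = mollify φ μ g x := by
  have hsmooth : ContDiff ℝ (⊤ : ℕ∞) fun y => φ.normed μ (x - y) :=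
    φ.contDiff_normed.comp (contDiff_const.sub contDiff_id)
  have hsupp : tsupport (fun y => φ.normed μ (x - y)) ⊆ closedBall x φ.rOut := by
    refine closure_minimal (fun y hy => ?_) isClosed_closedBall
    have hxy : x - y ∈ Function.support (φ.normed μ) := hy
    rw [φ.support_normed_eq, mem_ball_zero_iff] at hxy
    rw [mem_closedBall', dist_eq_norm]
    exact hxy.le
  have hderiv : ∀ y, fderiv ℝ (fun y => φ.normed μ (x - y)) y v
      = -fderiv ℝ (φ.normed μ) (x - y) v := fun y => by
    have hsub : HasFDerivAt (fun y : E => x - y) (-ContinuousLinearMap.id ℝ E) y :=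
      (hasFDerivAt_id y).const_sub x
    have hnormed : DifferentiableAt ℝ (φ.normed μ) (x - y) :=
      (φ.contDiff_normed (n := 1)).differentiable one_ne_zero _
    have hcomp : HasFDerivAt (fun y => φ.normed μ (x - y)) _ y := hnormed.hasFDerivAt.comp y hsub
    rw [hcomp.fderiv]
    simp
  have htest := hw _ hsmooth (HasCompactSupport.of_support_subset_isCompact
    (isCompact_closedBall x φ.rOut) ((subset_tsupport _).trans hsupp)) (hsupp.trans hx)
  simp only [hderiv, neg_smul, integral_neg, neg_inj] at htest
  rw [← integral_sub_left_eq_self _ μ x, mollify_apply,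
    ← integral_sub_left_eq_self (fun t => φ.normed μ t • g (x - t)) μ x]
  simpa only [sub_sub_cancel] using htest

theorem HasWeakDirDeriv.hasDerivAt_mollify_comp [CompleteSpace F] {Ω : Set E} {v : E}
    (hw : HasWeakDirDeriv Ω μ v f g) (hf : LocallyIntegrable f μ) (φ : ContDiffBump (0 : E))
    {γ : ℝ → E} {t : ℝ} (hγ : HasDerivAt γ v t) (hball : closedBall (γ t) φ.rOut ⊆ Ω) :
    HasDerivAt (fun s => mollify φ μ f (γ s)) (mollify φ μ g (γ t)) t := by
  have hφ : ContDiff ℝ 1 (φ.normed μ) := φ.contDiff_normed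
  have hderiv := φ.hasCompactSupport_normed.hasFDerivAt_convolution_left
    (ContinuousLinearMap.lsmul ℝ ℝ) hφ hf (γ t)
  have hex := (φ.hasCompactSupport_normed.fderiv (𝕜 := ℝ)).convolutionExists_left
    ((ContinuousLinearMap.lsmul ℝ ℝ (E := F)).precompL E) (hφ.continuous_fderiv one_ne_zero) hf
    (γ t)
  refine (hderiv.comp_hasDerivAt t hγ).congr_deriv ?_
  rw [convolution_def, ContinuousLinearMap.integral_apply hex]
  exact hw.integral_fderiv_normed_smul φ hball

end Mollification

section GoodLines

variable {E : Type*} [NormedAddCommGroup E] [NormedSpace ℝ E] [FiniteDimensional ℝ E]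
  [MeasurableSpace E]

/-- `γ` is a good line for a map `u` and its directional derivative `g`, relative to mollifiers
`φ n`: along `γ`, both restrict to integrable functions that are the `L¹` limits of their
mollifications, and `u` has unit modulus in `Ω`. Almost every line parallel to an axis is good. -/
structure IsGoodLine (Ω : Set E) (μ : Measure E) (φ : ℕ → ContDiffBump (0 : E)) (u g : E → ℂ)
    (γ : ℝ → E) : Prop where
  integrable_comp : Integrable fun t => u (γ t)
  integrable_deriv_comp : Integrable fun t => g (γ t)
  norm_eq_one : ∀ᵐ t, γ t ∈ Ω → ‖u (γ t)‖ = 1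
  tendsto_mollify :
    Tendsto (fun n => ∫⁻ t, ‖mollify (φ n) μ u (γ t) - u (γ t)‖ₑ) atTop (𝓝 0)
  tendsto_mollify_deriv :
    Tendsto (fun n => ∫⁻ t, ‖mollify (φ n) μ g (γ t) - g (γ t)‖ₑ) atTop (𝓝 0)

theorem IsGoodLine.exists_tendsto_mollify_endpoints [BorelSpace E] {μ : Measure E}
    [μ.IsAddHaarMeasure] {Ω : Set E} {φ : ℕ → ContDiffBump (0 : E)} {u g : E → ℂ}
    {γ : ℝ → E} {v : E} (h : IsGoodLine Ω μ φ u g γ) (hΩ : IsOpen Ω)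
    (hu : LocallyIntegrable u μ) (hg : LocallyIntegrable g μ) (hw : HasWeakDirDeriv Ω μ v u g)
    (hφ : Tendsto (fun n => (φ n).rOut) atTop (𝓝 0)) (hγ : ∀ t, HasDerivAt γ v t) {a b : ℝ}
    (hab : a < b) (hγΩ : MapsTo γ (Icc a b) Ω) :
    ∃ wa wb : ℂ, Tendsto (fun n => mollify (φ n) μ u (γ a)) atTop (𝓝 wa) ∧
      Tendsto (fun n => mollify (φ n) μ u (γ b)) atTop (𝓝 wb) ∧ wa ≠ 0 ∧
      wb = wa * Complex.exp (∫ t in a..b, starRingEnd ℂ (u (γ t)) * g (γ t)) := by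
  have hγc : Continuous γ := continuous_iff_continuousAt.2 fun t => (hγ t).continuousAt
  obtain ⟨δ, hδ, hδΩ⟩ :=
    (isCompact_Icc.image hγc).exists_cthickening_subset_open hΩ hγΩ.image_subset
  have hderiv : ∀ᶠ n in atTop, ∀ t ∈ Icc a b,
      HasDerivAt (fun t => mollify (φ n) μ u (γ t)) (mollify (φ n) μ g (γ t)) t := by
    filter_upwards [hφ.eventually_lt_const hδ] with n hn t ht
    refine hw.hasDerivAt_mollify_comp hu (φ n) (hγ t) fun z hz => hδΩ ?_
    exact mem_cthickening_of_dist_le z (γ t) δ _ (mem_image_of_mem γ ht)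
      ((mem_closedBall.1 hz).trans hn.le)
  have hrestrict : ∀ {f : ℕ → ℝ → ℂ}, Tendsto (fun n => ∫⁻ t, ‖f n t‖ₑ) atTop (𝓝 0) →
      Tendsto (fun n => ∫⁻ t in Ioc a b, ‖f n t‖ₑ) atTop (𝓝 0) := fun hf =>
    tendsto_of_tendsto_of_tendsto_of_le_of_le tendsto_const_nhds hf (fun _ => zero_le)
      fun _ => setLIntegral_le_lintegral _ _
  have hnorm : ∀ᵐ t ∂volume.restrict (Ioc a b), ‖u (γ t)‖ = 1 := by
    filter_upwards [ae_restrict_of_ae h.norm_eq_one, ae_restrict_mem measurableSet_Ioc]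
      with t ht htab
    exact ht (hγΩ (Ioc_subset_Icc_self htab))
  exact exists_tendsto_endpoints_eq_mul_exp hab
    (fun n => (continuous_mollify (φ n) hu).comp hγc)
    (fun n => (continuous_mollify (φ n) hg).comp hγc) hderiv
    h.integrable_comp.aestronglyMeasurable.restrict h.integrable_deriv_comp.integrableOn
    (hrestrict h.tendsto_mollify) (hrestrict h.tendsto_mollify_deriv) hnorm

variable {Ω : Set (ℝ × ℝ)} {φ : ℕ → ContDiffBump (0 : ℝ × ℝ)} {u g₁ g₂ : ℝ × ℝ → ℂ}

theorem exists_int_circulation_eq (hΩ : IsOpen Ω) (hu : LocallyIntegrable u)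
    (hg₁ : LocallyIntegrable g₁) (hg₂ : LocallyIntegrable g₂)
    (hw₁ : HasWeakDirDeriv Ω volume (1, 0) u g₁) (hw₂ : HasWeakDirDeriv Ω volume (0, 1) u g₂)
    (hφ : Tendsto (fun n => (φ n).rOut) atTop (𝓝 0)) {x₀ x₁ y₀ y₁ : ℝ} (hx : x₀ < x₁)
    (hy : y₀ < y₁) (hcell : Icc x₀ x₁ ×ˢ Icc y₀ y₁ ⊆ Ω)
    (hleft : IsGoodLine Ω volume φ u g₂ (Prod.mk x₀))
    (hright : IsGoodLine Ω volume φ u g₂ (Prod.mk x₁))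
    (hbottom : IsGoodLine Ω volume φ u g₁ (·, y₀)) (htop : IsGoodLine Ω volume φ u g₁ (·, y₁)) :
    ∃ n : ℤ, (∫ x in x₀..x₁, starRingEnd ℂ (u (x, y₀)) * g₁ (x, y₀))
      + (∫ y in y₀..y₁, starRingEnd ℂ (u (x₁, y)) * g₂ (x₁, y))
      = (∫ y in y₀..y₁, starRingEnd ℂ (u (x₀, y)) * g₂ (x₀, y))
      + (∫ x in x₀..x₁, starRingEnd ℂ (u (x, y₁)) * g₁ (x, y₁))
      + n * (2 * Real.pi * Complex.I) := by
  have hvert : ∀ x y : ℝ, HasDerivAt (Prod.mk x) ((0, 1) : ℝ × ℝ) y := fun x y =>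
    (hasDerivAt_const y x).prodMk (hasDerivAt_id y)
  have hhoriz : ∀ y x : ℝ, HasDerivAt (·, y) ((1, 0) : ℝ × ℝ) x := fun y x =>
    (hasDerivAt_id x).prodMk (hasDerivAt_const x y)
  obtain ⟨w₀₀, w₀₁, h₀₀, h₀₁, hne, hl⟩ := hleft.exists_tendsto_mollify_endpoints hΩ hu hg₂ hw₂ hφ
    (hvert x₀) hy fun y h => hcell ⟨left_mem_Icc.2 hx.le, h⟩
  obtain ⟨w₁₀, w₁₁, h₁₀, h₁₁, -, hr⟩ := hright.exists_tendsto_mollify_endpoints hΩ hu hg₂ hw₂ hφ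
    (hvert x₁) hy fun y h => hcell ⟨right_mem_Icc.2 hx.le, h⟩
  obtain ⟨w₀₀', w₁₀', h₀₀', h₁₀', -, hb⟩ := hbottom.exists_tendsto_mollify_endpoints hΩ hu hg₁ hw₁
    hφ (hhoriz y₀) hx fun x h => hcell ⟨h, left_mem_Icc.2 hy.le⟩
  obtain ⟨w₀₁', w₁₁', h₀₁', h₁₁', -, ht⟩ := htop.exists_tendsto_mollify_endpoints hΩ hu hg₁ hw₁
    hφ (hhoriz y₁) hx fun x h => hcell ⟨h, right_mem_Icc.2 hy.le⟩
  obtain rfl := tendsto_nhds_unique h₀₀ h₀₀'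
  obtain rfl := tendsto_nhds_unique h₁₀ h₁₀'
  obtain rfl := tendsto_nhds_unique h₀₁ h₀₁'
  obtain rfl := tendsto_nhds_unique h₁₁ h₁₁'
  rw [ht, hl, hb, mul_assoc, mul_assoc, ← Complex.exp_add, ← Complex.exp_add] at hr
  exact Complex.exp_eq_exp_iff_exists_int.1 (mul_left_cancel₀ hne hr.symm)

theorem ae_isGoodLine_vertical (hu : Integrable u) (hg₂ : Integrable g₂)
    (hnorm : ∀ᵐ z, z ∈ Ω → ‖u z‖ = 1)
    (hφu : ∑' n, ∫⁻ z, ‖mollify (φ n) volume u z - u z‖ₑ ≠ ∞)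
    (hφg : ∑' n, ∫⁻ z, ‖mollify (φ n) volume g₂ z - g₂ z‖ₑ ≠ ∞) :
    ∀ᵐ x, IsGoodLine Ω volume φ u g₂ (Prod.mk x) := by
  filter_upwards [hu.prod_right_ae, hg₂.prod_right_ae, Measure.ae_ae_of_ae_prod hnorm,
    ae_tendsto_lintegral_prod (fun n => aemeasurable_enorm_mollify_sub (φ n) hu) hφu,
    ae_tendsto_lintegral_prod (fun n => aemeasurable_enorm_mollify_sub (φ n) hg₂) hφg]
    with x hux hgx hnormx hφux hφgx
  exact ⟨hux, hgx, hnormx, hφux, hφgx⟩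

theorem ae_isGoodLine_horizontal (hu : Integrable u) (hg₁ : Integrable g₁)
    (hnorm : ∀ᵐ z, z ∈ Ω → ‖u z‖ = 1)
    (hφu : ∑' n, ∫⁻ z, ‖mollify (φ n) volume u z - u z‖ₑ ≠ ∞)
    (hφg : ∑' n, ∫⁻ z, ‖mollify (φ n) volume g₁ z - g₁ z‖ₑ ≠ ∞) :
    ∀ᵐ y, IsGoodLine Ω volume φ u g₁ (·, y) := by
  have hswap : MeasurePreserving (Prod.swap : ℝ × ℝ → ℝ × ℝ) volume volume :=
    Measure.measurePreserving_swap
  filter_upwards [hu.prod_left_ae, hg₁.prod_left_ae,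
    Measure.ae_ae_of_ae_prod (hswap.quasiMeasurePreserving.ae hnorm),
    ae_tendsto_lintegral_prod_symm (fun n => aemeasurable_enorm_mollify_sub (φ n) hu) hφu,
    ae_tendsto_lintegral_prod_symm (fun n => aemeasurable_enorm_mollify_sub (φ n) hg₁) hφg]
    with y huy hgy hnormy hφuy hφgy
  exact ⟨huy, hgy, hnormy, hφuy, hφgy⟩

end GoodLines

section Grid

theorem exists_shift_tsum_mul_le {f : ℝ → ℝ≥0∞} (hf : AEMeasurable f) {P : ℝ → Prop}
    (hP : ∀ᵐ x, P x) {ε : ℝ} (hε : 0 < ε) :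
    ∃ a, (∀ k : ℤ, P (a + k • ε)) ∧
      (∑' k : ℤ, f (a + k • ε)) * ENNReal.ofReal ε ≤ ∫⁻ x, f x := by
  have hshift : ∀ k : ℤ, MeasurePreserving (fun s : ℝ => s + k • ε) volume volume :=
    fun k => measurePreserving_add_right volume _
  have hfk : ∀ k : ℤ, AEMeasurable (fun s => f (s + k • ε)) (volume.restrict (Ioc 0 ε)) :=
    fun k => (hf.comp_quasiMeasurePreserving (hshift k).quasiMeasurePreserving).restrict
  have hint : ∫⁻ s in Ioc 0 ε, ∑' k : ℤ, f (s + k • ε) = ∫⁻ x, f x := by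
    have hk : ∀ k : ℤ, ∫⁻ s in Ioc 0 ε, f (s + k • ε)
        = ∫⁻ x in Ioc (0 + k • ε) (0 + (k + 1) • ε), f x := fun k => by
      have hcomp := (hshift k).setLIntegral_comp_preimage_emb
        (measurableEmbedding_addRight _) f (Ioc (0 + k • ε) (0 + (k + 1) • ε))
      rw [← hcomp, preimage_add_const_Ioc]
      simp only [add_smul, one_smul, zero_add, sub_self, add_sub_cancel_left]
    rw [lintegral_tsum hfk, tsum_congr hk, ← lintegral_iUnion (fun _ => measurableSet_Ioc)
      (pairwise_disjoint_Ioc_add_zsmul 0 ε), iUnion_Ioc_add_zsmul hε 0, setLIntegral_univ]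
  have hgood : ∀ᵐ s ∂volume.restrict (Ioc 0 ε), ∀ k : ℤ, P (s + k • ε) :=
    ae_restrict_of_ae (ae_all_iff.2 fun k => (hshift k).quasiMeasurePreserving.ae hP)
  have hne : volume.restrict (Ioc 0 ε) ≠ 0 := by
    rw [Ne, Measure.restrict_eq_zero, Real.volume_Ioc]
    simpa using hε
  have hmeas : AEMeasurable (fun s => ∑' k : ℤ, f (s + k • ε)) (volume.restrict (Ioc 0 ε)) :=
    .tsum hfk
  obtain ⟨a, ha, hle⟩ := exists_notMem_null_le_laverage hne hmeas (ae_iff.1 hgood)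
  refine ⟨a, not_not.1 ha, ?_⟩
  rw [laverage_eq, hint, Measure.restrict_apply_univ, Real.volume_Ioc, sub_zero] at hle
  exact ENNReal.mul_le_of_le_div hle

/-- The node with index `i` of the square grid with mesh `ε` and origin `a`. -/
def gridNode (ε : ℝ) (a : ℝ × ℝ) (i : ℤ × ℤ) : ℝ × ℝ := (a.1 + i.1 • ε, a.2 + i.2 • ε)

/-- The half-open cell of the grid whose lower left corner is `gridNode ε a i`; its closure is the
order interval `Icc (gridNode ε a i) (gridNode ε a (i + 1))`. -/
def gridCell (ε : ℝ) (a : ℝ × ℝ) (i : ℤ × ℤ) : Set (ℝ × ℝ) :=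
  Ioc (a.1 + i.1 • ε) (a.1 + (i.1 + 1) • ε) ×ˢ Ioc (a.2 + i.2 • ε) (a.2 + (i.2 + 1) • ε)

/-- The indices of the closed grid cells contained in `Ω`. -/
def interiorCells (Ω : Set (ℝ × ℝ)) (ε : ℝ) (a : ℝ × ℝ) : Set (ℤ × ℤ) :=
  {i | Icc (gridNode ε a i) (gridNode ε a (i + 1)) ⊆ Ω}

/-- The integral of `f` over the left side of the grid cell with index `i`. -/
def leftEdgeIntegral (ε : ℝ) (a : ℝ × ℝ) (f : ℝ × ℝ → ℝ) (i : ℤ × ℤ) : ℝ :=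
  ∫ y in (a.2 + i.2 • ε)..(a.2 + (i.2 + 1) • ε), f (a.1 + i.1 • ε, y)

/-- The integral of `f` over the bottom side of the grid cell with index `i`. -/
def bottomEdgeIntegral (ε : ℝ) (a : ℝ × ℝ) (f : ℝ × ℝ → ℝ) (i : ℤ × ℤ) : ℝ :=
  ∫ x in (a.1 + i.1 • ε)..(a.1 + (i.1 + 1) • ε), f (x, a.2 + i.2 • ε)

/-- The outward flux of the vector field `(f, g)` across the boundary of the grid cell with
index `i`. -/
def cellFlux (ε : ℝ) (a : ℝ × ℝ) (f g : ℝ × ℝ → ℝ) (i : ℤ × ℤ) : ℝ :=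
  (bottomEdgeIntegral ε a g (i + (0, 1)) - bottomEdgeIntegral ε a g i) +
    (leftEdgeIntegral ε a f (i + (1, 0)) - leftEdgeIntegral ε a f i)

/-- The values at the grid nodes of a function `ψ`, replaced by zero unless the cell of the node
lies in `Ω`. -/
def trimmedValue (Ω : Set (ℝ × ℝ)) (ε : ℝ) (a : ℝ × ℝ) (ψ : ℝ × ℝ → ℝ) : ℤ × ℤ → ℝ :=
  (interiorCells Ω ε a).indicator fun i => ψ (gridNode ε a i)

variable {ε : ℝ} {a : ℝ × ℝ} {Ω : Set (ℝ × ℝ)}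

theorem measurableSet_gridCell (i : ℤ × ℤ) : MeasurableSet (gridCell ε a i) :=
  measurableSet_Ioc.prod measurableSet_Ioc

theorem gridCell_subset_Icc (i : ℤ × ℤ) :
    gridCell ε a i ⊆ Icc (gridNode ε a i) (gridNode ε a (i + 1)) := by
  rw [Icc_prod_eq]
  exact prod_mono Ioc_subset_Icc_self Ioc_subset_Icc_self

theorem pairwise_disjoint_gridCell : Pairwise (Function.onFun Disjoint (gridCell ε a)) := by
  intro i j hij
  rw [Function.onFun, gridCell, gridCell, Set.disjoint_prod]
  rcases not_and_or.1 (Prod.ext_iff.not.1 hij) with h | h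
  · exact Or.inl (pairwise_disjoint_Ioc_add_zsmul _ _ h)
  · exact Or.inr (pairwise_disjoint_Ioc_add_zsmul _ _ h)

theorem iUnion_gridCell (hε : 0 < ε) : ⋃ i, gridCell ε a i = univ := by
  simp only [gridCell, iUnion_prod', ← prod_iUnion, ← iUnion_prod_const]
  simp only [iUnion_Ioc_add_zsmul hε, univ_prod_univ]

theorem volume_gridCell (i : ℤ × ℤ) :
    volume (gridCell ε a i) = ENNReal.ofReal ε * ENNReal.ofReal ε := by
  rw [gridCell, Measure.volume_eq_prod, Measure.prod_prod, Real.volume_Ioc, Real.volume_Ioc]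
  simp only [add_smul, one_smul, add_sub_add_left_eq_sub, add_sub_cancel_left]

theorem dist_le_of_mem_Icc_gridNode {i : ℤ × ℤ} {z w : ℝ × ℝ}
    (hz : z ∈ Icc (gridNode ε a i) (gridNode ε a (i + 1)))
    (hw : w ∈ Icc (gridNode ε a i) (gridNode ε a (i + 1))) : dist z w ≤ ε := by
  rw [gridNode, gridNode, Icc_prod_eq] at hz hw
  refine max_le ((Real.dist_le_of_mem_Icc hz.1 hw.1).trans_eq ?_)
    ((Real.dist_le_of_mem_Icc hz.2 hw.2).trans_eq ?_) <;>
  simp [add_smul]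

theorem gridNode_mem_Icc (hε : 0 ≤ ε) (i : ℤ × ℤ) :
    gridNode ε a i ∈ Icc (gridNode ε a i) (gridNode ε a (i + 1)) := by
  refine left_mem_Icc.2 ⟨?_, ?_⟩ <;> simpa [gridNode, add_smul] using hε

theorem finite_interiorCells (hε : 0 < ε) (hΩ : volume Ω ≠ ∞) :
    (interiorCells Ω ε a).Finite := by
  have hdisj := Measure.finite_const_le_meas_of_disjoint_iUnion (volume.restrict Ω)
    (ε := ENNReal.ofReal ε * ENNReal.ofReal ε) (by simpa using hε)
    (measurableSet_gridCell (ε := ε) (a := a)) pairwise_disjoint_gridCell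
    (by rwa [iUnion_gridCell hε, Measure.restrict_apply_univ])
  refine hdisj.subset fun i hi => ?_
  change ENNReal.ofReal ε * ENNReal.ofReal ε ≤ _
  rw [Measure.restrict_apply (measurableSet_gridCell i),
    inter_eq_left.2 ((gridCell_subset_Icc i).trans hi), volume_gridCell]

theorem mem_interiorCells_of_cthickening_subset {K : Set (ℝ × ℝ)} (hK : cthickening ε K ⊆ Ω)
    {i : ℤ × ℤ} {z : ℝ × ℝ} (hz : z ∈ gridCell ε a i) (hzK : z ∈ K) : i ∈ interiorCells Ω ε a :=
  fun w hw => hK (mem_cthickening_of_dist_le w z ε K hzK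
    (dist_le_of_mem_Icc_gridNode hw (gridCell_subset_Icc i hz)))

/-- The divergence of the vector field `(f, g)` on the plane. -/
def divergence (f g : ℝ × ℝ → ℝ) (z : ℝ × ℝ) : ℝ := fderiv ℝ f z (1, 0) + fderiv ℝ g z (0, 1)

theorem continuous_divergence {f g : ℝ × ℝ → ℝ} (hf : ContDiff ℝ 1 f) (hg : ContDiff ℝ 1 g) :
    Continuous (divergence f g) :=
  ((hf.continuous_fderiv one_ne_zero).clm_apply continuous_const).add
    ((hg.continuous_fderiv one_ne_zero).clm_apply continuous_const)

theorem hasCompactSupport_divergence {f g : ℝ × ℝ → ℝ} (hf : HasCompactSupport f)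
    (hg : HasCompactSupport g) : HasCompactSupport (divergence f g) :=
  (hf.fderiv_apply ℝ (1, 0)).add (hg.fderiv_apply ℝ (0, 1))

theorem divergence_eq_zero_of_notMem {f g : ℝ × ℝ → ℝ} {z : ℝ × ℝ}
    (hz : z ∉ tsupport f ∪ tsupport g) : divergence f g z = 0 := by
  obtain ⟨hzf, hzg⟩ := not_or.1 hz
  rw [divergence, fderiv_of_notMem_tsupport ℝ hzf, fderiv_of_notMem_tsupport ℝ hzg]
  simp

theorem setIntegral_gridCell_divergence (hε : 0 ≤ ε) {f g : ℝ × ℝ → ℝ} (hf : ContDiff ℝ 1 f)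
    (hg : ContDiff ℝ 1 g) (i : ℤ × ℤ) :
    ∫ z in gridCell ε a i, divergence f g z = cellFlux ε a f g i := by
  have hcell : gridCell ε a i =ᵐ[volume] Icc (gridNode ε a i) (gridNode ε a (i + 1)) := by
    rw [Icc_prod_eq]
    exact Measure.set_prod_ae_eq Ioc_ae_eq_Icc Ioc_ae_eq_Icc
  refine (setIntegral_congr_set hcell).trans ?_
  simp only [divergence]
  rw [integral_divergence_prod_Icc_of_hasFDerivAt_of_le _ _ _ _ _ _
    (gridNode_mem_Icc hε i).2 hf.continuous.continuousOn hg.continuous.continuousOn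
    (fun z _ => (hf.differentiable one_ne_zero z).hasFDerivAt)
    (fun z _ => (hg.differentiable one_ne_zero z).hasFDerivAt)
    ((continuous_divergence hf hg).continuousOn.integrableOn_compact isCompact_Icc)]
  simp only [cellFlux, bottomEdgeIntegral, leftEdgeIntegral, gridNode, Prod.fst_add, Prod.snd_add,
    Prod.fst_one, Prod.snd_one, add_zero]
  ring

theorem enorm_integral_mul_sub_sum_le {α ι : Type*} [MeasurableSpace α] {μ : Measure α}
    {Q : ι → Set α} (hQ : ∀ i, MeasurableSet (Q i)) (hQd : Pairwise (Function.onFun Disjoint Q))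
    {D ψ : α → ℝ} (hD : Integrable D μ) (hDψ : Integrable (fun z => D z * ψ z) μ) {S : Finset ι}
    (hS : ∀ z ∉ ⋃ i ∈ S, Q i, D z = 0) {m : ι → ℝ} {c : ℝ≥0∞}
    (hm : ∀ i ∈ S, ∀ z ∈ Q i, ‖ψ z - m i‖ₑ ≤ c) :
    ‖∫ z, D z * ψ z ∂μ - ∑ i ∈ S, (∫ z in Q i, D z ∂μ) * m i‖ₑ ≤ c * ∫⁻ z, ‖D z‖ₑ ∂μ := by
  have hsum : ∫ z, D z * ψ z ∂μ = ∑ i ∈ S, ∫ z in Q i, D z * ψ z ∂μ := by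
    rw [← integral_biUnion_finset S (fun i _ => hQ i) (hQd.set_pairwise _)
      fun i _ => hDψ.integrableOn]
    exact (setIntegral_eq_integral_of_forall_compl_eq_zero fun z hz => by simp [hS z hz]).symm
  have hcell : ∀ i ∈ S, ‖∫ z in Q i, D z * ψ z ∂μ - (∫ z in Q i, D z ∂μ) * m i‖ₑ ≤
      c * ∫⁻ z in Q i, ‖D z‖ₑ ∂μ := by
    intro i hi
    rw [← integral_mul_const, ← integral_sub hDψ.integrableOn (hD.integrableOn.mul_const _),
      ← lintegral_const_mul'' _ hD.aestronglyMeasurable.enorm.restrict]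
    refine (enorm_integral_le_lintegral_enorm _).trans (setLIntegral_mono' (hQ i) fun z hz => ?_)
    rw [← mul_sub, enorm_mul, mul_comm]
    gcongr
    exact hm i hi z hz
  calc ‖∫ z, D z * ψ z ∂μ - ∑ i ∈ S, (∫ z in Q i, D z ∂μ) * m i‖ₑ
      ≤ ∑ i ∈ S, c * ∫⁻ z in Q i, ‖D z‖ₑ ∂μ := by
        rw [hsum, ← Finset.sum_sub_distrib]
        exact (enorm_sum_le _ _).trans (Finset.sum_le_sum hcell)
    _ = c * ∫⁻ z in ⋃ i ∈ S, Q i, ‖D z‖ₑ ∂μ := by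
        rw [← Finset.mul_sum, lintegral_biUnion_finset (hQd.set_pairwise _) fun i _ => hQ i]
    _ ≤ c * ∫⁻ z, ‖D z‖ₑ ∂μ := by gcongr; exact Measure.restrict_le_self

theorem enorm_sum_sub_mul_le {G : Type*} [AddGroup G] {S : Finset G} (e : G) (E : G → ℝ)
    {m : G → ℝ} (hmS : ∀ i ∉ S, m i = 0) {c : ℝ≥0∞} (hm : ∀ i, ‖m (i - e) - m i‖ₑ ≤ c) :
    ‖∑ i ∈ S, (E (i + e) - E i) * m i‖ₑ ≤ c * ∑' i, ‖E i‖ₑ := by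
  have hzero : ∀ (F : G → ℝ), ∀ i ∉ S, F i * m i = 0 := fun F i hi => by rw [hmS i hi, mul_zero]
  have hs : ∀ F : G → ℝ, Summable fun i => F i * m i :=
    fun F => summable_of_ne_finset_zero (hzero F)
  have hshift : ∑' i, E (i + e) * m i = ∑' i, E i * m (i - e) := by
    simpa using (Equiv.addRight e).tsum_eq fun i => E i * m (i - e)
  have hsshift : Summable fun i => E i * m (i - e) := by
    refine (Equiv.addRight e).summable_iff.1 ?_
    simpa only [Function.comp_def, Equiv.coe_addRight, add_sub_cancel_right] using
      hs fun i => E (i + e)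
  have habel : ∑ i ∈ S, (E (i + e) - E i) * m i = ∑' i, E i * (m (i - e) - m i) := by
    rw [← tsum_eq_sum (L := .unconditional G) (hzero fun i => E (i + e) - E i)]
    simp only [sub_mul, mul_sub]
    rw [(hs fun i => E (i + e)).tsum_sub (hs E), hshift, hsshift.tsum_sub (hs E)]
  rw [habel, ← ENNReal.tsum_mul_left]
  refine enorm_tsum_le_tsum_enorm.trans (ENNReal.tsum_le_tsum fun i => ?_)
  rw [enorm_mul, mul_comm]
  gcongr
  exact hm i

theorem tsum_enorm_integral_le_lintegral (hε : 0 < ε) (b : ℝ) (h : ℝ → ℝ) :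
    ∑' k : ℤ, ‖∫ y in (b + k • ε)..(b + (k + 1) • ε), h y‖ₑ ≤ ∫⁻ y, ‖h y‖ₑ := by
  have hle : ∀ k : ℤ, ‖∫ y in (b + k • ε)..(b + (k + 1) • ε), h y‖ₑ ≤
      ∫⁻ y in Ioc (b + k • ε) (b + (k + 1) • ε), ‖h y‖ₑ := fun k => by
    rw [intervalIntegral.integral_of_le (by simpa [add_smul] using hε.le)]
    exact enorm_integral_le_lintegral_enorm _
  calc _ ≤ ∑' k : ℤ, ∫⁻ y in Ioc (b + k • ε) (b + (k + 1) • ε), ‖h y‖ₑ := ENNReal.tsum_le_tsum hle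
    _ = ∫⁻ y, ‖h y‖ₑ := by
      rw [← lintegral_iUnion (fun _ => measurableSet_Ioc) (pairwise_disjoint_Ioc_add_zsmul b ε),
        iUnion_Ioc_add_zsmul hε b, setLIntegral_univ]

theorem tsum_enorm_leftEdgeIntegral_le (hε : 0 < ε) (f : ℝ × ℝ → ℝ) :
    ∑' i, ‖leftEdgeIntegral ε a f i‖ₑ ≤ ∑' k : ℤ, ∫⁻ y, ‖f (a.1 + k • ε, y)‖ₑ := by
  rw [ENNReal.tsum_prod']
  exact ENNReal.tsum_le_tsum fun k => tsum_enorm_integral_le_lintegral hε a.2 _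

theorem tsum_enorm_bottomEdgeIntegral_le (hε : 0 < ε) (f : ℝ × ℝ → ℝ) :
    ∑' i, ‖bottomEdgeIntegral ε a f i‖ₑ ≤ ∑' k : ℤ, ∫⁻ x, ‖f (x, a.2 + k • ε)‖ₑ := by
  rw [ENNReal.tsum_prod', ENNReal.tsum_comm]
  exact ENNReal.tsum_le_tsum fun k => tsum_enorm_integral_le_lintegral hε a.1 _

theorem enorm_sum_cellFlux_mul_le (hε : 0 < ε) (f g : ℝ × ℝ → ℝ) {S : Finset (ℤ × ℤ)}
    {m : ℤ × ℤ → ℝ} (hmS : ∀ i ∉ S, m i = 0) {c : ℝ≥0∞} (hm₁ : ∀ i, ‖m (i - (1, 0)) - m i‖ₑ ≤ c)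
    (hm₂ : ∀ i, ‖m (i - (0, 1)) - m i‖ₑ ≤ c) :
    ‖∑ i ∈ S, cellFlux ε a f g i * m i‖ₑ ≤
      c * ((∑' k : ℤ, ∫⁻ y, ‖f (a.1 + k • ε, y)‖ₑ) + ∑' k : ℤ, ∫⁻ x, ‖g (x, a.2 + k • ε)‖ₑ) := by
  simp only [cellFlux, add_mul (_ - _) (_ - _), Finset.sum_add_distrib]
  rw [mul_add, add_comm]
  refine (enorm_add_le _ _).trans (add_le_add ?_ ?_)
  · refine (enorm_sum_sub_mul_le _ _ hmS hm₁).trans ?_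
    gcongr
    exact tsum_enorm_leftEdgeIntegral_le hε f
  · refine (enorm_sum_sub_mul_le _ _ hmS hm₂).trans ?_
    gcongr
    exact tsum_enorm_bottomEdgeIntegral_le hε g

theorem cellFlux_sub {f g f' g' : ℝ × ℝ → ℝ}
    (hf : ∀ k : ℤ, Integrable fun y => f (a.1 + k • ε, y))
    (hg : ∀ k : ℤ, Integrable fun x => g (x, a.2 + k • ε))
    (hf' : Continuous f') (hg' : Continuous g') (i : ℤ × ℤ) :
    cellFlux ε a (f - f') (g - g') i = cellFlux ε a f g i - cellFlux ε a f' g' i := by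
  have hleft : ∀ j, leftEdgeIntegral ε a (f - f') j =
      leftEdgeIntegral ε a f j - leftEdgeIntegral ε a f' j := fun j =>
    intervalIntegral.integral_sub (hf j.1).intervalIntegrable
      ((hf'.comp (.prodMk_right _)).intervalIntegrable _ _)
  have hbottom : ∀ j, bottomEdgeIntegral ε a (g - g') j =
      bottomEdgeIntegral ε a g j - bottomEdgeIntegral ε a g' j := fun j =>
    intervalIntegral.integral_sub (hg j.2).intervalIntegrable
      ((hg'.comp (.prodMk_left _)).intervalIntegrable _ _)
  simp only [cellFlux, hleft, hbottom]
  ring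

theorem abs_trimmedValue_sub_le (hε : 0 ≤ ε) {ψ : ℝ × ℝ → ℝ} {L : ℝ≥0} (hψ : LipschitzWith L ψ)
    (hψΩ : ∀ z ∉ Ω, ψ z = 0) (i : ℤ × ℤ) :
    |trimmedValue Ω ε a ψ i - ψ (gridNode ε a i)| ≤ L * ε := by
  by_cases hi : i ∈ interiorCells Ω ε a
  · rw [trimmedValue, indicator_of_mem hi, sub_self, abs_zero]
    positivity
  · obtain ⟨w, hw, hwΩ⟩ := not_subset.1 hi
    rw [trimmedValue, indicator_of_notMem hi, ← hψΩ w hwΩ]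
    refine (hψ.dist_le_mul w _).trans ?_
    gcongr
    exact dist_le_of_mem_Icc_gridNode hw (gridNode_mem_Icc hε i)

theorem dist_gridNode_sub_le (hε : 0 ≤ ε) {e : ℤ × ℤ} (he : ‖e‖ ≤ 1) (i : ℤ × ℤ) :
    dist (gridNode ε a (i - e)) (gridNode ε a i) ≤ ε := by
  have hcoord : ∀ (b : ℝ) (k l : ℤ), ‖l‖ ≤ 1 → dist (b + (k - l) • ε) (b + k • ε) ≤ ε := by
    intro b k l hl
    rw [dist_add_left, dist_eq_norm, sub_smul, sub_sub_cancel_left, norm_neg,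
      zsmul_eq_mul, norm_mul, Int.norm_cast_real, Real.norm_of_nonneg hε]
    exact mul_le_of_le_one_left hε hl
  exact max_le (hcoord _ _ _ ((norm_fst_le e).trans he)) (hcoord _ _ _ ((norm_snd_le e).trans he))

theorem enorm_trimmedValue_sub_le (hε : 0 ≤ ε) {ψ : ℝ × ℝ → ℝ} {L : ℝ≥0} (hψ : LipschitzWith L ψ)
    (hψΩ : ∀ z ∉ Ω, ψ z = 0) {e : ℤ × ℤ} (he : ‖e‖ ≤ 1) (i : ℤ × ℤ) :
    ‖trimmedValue Ω ε a ψ (i - e) - trimmedValue Ω ε a ψ i‖ₑ ≤ L * ENNReal.ofReal (3 * ε) := by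
  rw [← ENNReal.ofReal_coe_nnreal, ← ENNReal.ofReal_mul L.coe_nonneg, ← ofReal_norm]
  refine ENNReal.ofReal_le_ofReal ?_
  have h₁ := abs_trimmedValue_sub_le (a := a) hε hψ hψΩ (i - e)
  have h₂ := abs_trimmedValue_sub_le (a := a) hε hψ hψΩ i
  have h₃ : |ψ (gridNode ε a (i - e)) - ψ (gridNode ε a i)| ≤ L * ε :=
    (hψ.dist_le_mul _ _).trans (by gcongr; exact dist_gridNode_sub_le hε he i)
  rw [Real.norm_eq_abs]
  rw [abs_le] at h₁ h₂ h₃ ⊢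
  constructor <;> linarith [h₁.1, h₁.2, h₂.1, h₂.2, h₃.1, h₃.2]

section LineDeriv

variable {E : Type*} [NormedAddCommGroup E] [NormedSpace ℝ E] {ψ f : E → ℝ} {L : ℝ≥0} {v : E}

theorem enorm_lineDeriv_mul_le (hψ : LipschitzWith L ψ) (hv : ‖v‖ ≤ 1) (z : E) :
    ‖lineDeriv ℝ ψ z v * f z‖ₑ ≤ L * ‖f z‖ₑ := by
  rw [enorm_mul]
  gcongr
  exact enorm_le_coe.2 <| (norm_lineDeriv_le_of_lipschitz ℝ hψ).trans
    (mul_le_of_le_one_right L.coe_nonneg hv)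

variable [MeasurableSpace E] {μ : Measure E}

theorem enorm_integral_lineDeriv_mul_le (hψ : LipschitzWith L ψ) (hv : ‖v‖ ≤ 1) :
    ‖∫ z, lineDeriv ℝ ψ z v * f z ∂μ‖ₑ ≤ L * ∫⁻ z, ‖f z‖ₑ ∂μ :=
  calc _ ≤ ∫⁻ z, L * ‖f z‖ₑ ∂μ := (enorm_integral_le_lintegral_enorm _).trans
        (lintegral_mono fun z => enorm_lineDeriv_mul_le hψ hv z)
    _ = L * ∫⁻ z, ‖f z‖ₑ ∂μ := lintegral_const_mul' _ _ ENNReal.coe_ne_top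

variable [BorelSpace E]

theorem integrable_lineDeriv_mul (hψ : LipschitzWith L ψ) (hf : Integrable f μ) :
    Integrable (fun z => lineDeriv ℝ ψ z v * f z) μ :=
  hf.bdd_mul (measurable_lineDeriv hψ.continuous).aestronglyMeasurable
    (.of_forall fun _ => norm_lineDeriv_le_of_lipschitz ℝ hψ)

theorem integral_lineDeriv_mul_sub {g : E → ℝ} (hψ : LipschitzWith L ψ) (hf : Integrable f μ)
    (hg : Integrable g μ) :
    ∫ z, lineDeriv ℝ ψ z v * (f - g) z ∂μ =
      ∫ z, lineDeriv ℝ ψ z v * f z ∂μ - ∫ z, lineDeriv ℝ ψ z v * g z ∂μ := by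
  rw [← integral_sub (integrable_lineDeriv_mul hψ hf) (integrable_lineDeriv_mul hψ hg)]
  simp only [Pi.sub_apply, mul_sub]

end LineDeriv

theorem integral_lineDeriv_add_eq_neg_divergence {ψ f g : ℝ × ℝ → ℝ} {L : ℝ≥0}
    (hψ : LipschitzWith L ψ) (hf : ContDiff ℝ 1 f) (hfc : HasCompactSupport f)
    (hg : ContDiff ℝ 1 g) (hgc : HasCompactSupport g) :
    ∫ z, (lineDeriv ℝ ψ z (1, 0) * f z + lineDeriv ℝ ψ z (0, 1) * g z) =
      -∫ z, divergence f g z * ψ z := by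
  have hparts : ∀ (h : ℝ × ℝ → ℝ) (v : ℝ × ℝ), ContDiff ℝ 1 h → HasCompactSupport h →
      Integrable (fun z => lineDeriv ℝ ψ z v * h z) ∧ Integrable (fun z => fderiv ℝ h z v * ψ z) ∧
        ∫ z, lineDeriv ℝ ψ z v * h z = -∫ z, fderiv ℝ h z v * ψ z := by
    intro h v hh hhc
    obtain ⟨C, hC⟩ := hh.lipschitzWith_of_hasCompactSupport hhc one_ne_zero
    refine ⟨integrable_lineDeriv_mul hψ (hh.continuous.integrable_of_hasCompactSupport hhc),
      (((hh.continuous_fderiv one_ne_zero).clm_apply continuous_const).mul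
        hψ.continuous).integrable_of_hasCompactSupport (hhc.fderiv_apply ℝ v).mul_right, ?_⟩
    rw [hψ.integral_lineDeriv_mul_eq hC hhc, ← integral_neg]
    congr 1 with z
    rw [(hh.differentiable one_ne_zero z).lineDeriv_eq_fderiv, map_neg, neg_mul]
  obtain ⟨hf₁, hf₂, hf₃⟩ := hparts f (1, 0) hf hfc
  obtain ⟨hg₁, hg₂, hg₃⟩ := hparts g (0, 1) hg hgc
  simp only [divergence, add_mul]
  rw [integral_add hf₁ hg₁, integral_add hf₂ hg₂, hf₃, hg₃, neg_add]

theorem enorm_integral_lineDeriv_add_sum_cellFlux_le_of_contDiff (hε : 0 ≤ ε)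
    {f g : ℝ × ℝ → ℝ} (hf : ContDiff ℝ 1 f) (hfc : HasCompactSupport f) (hg : ContDiff ℝ 1 g)
    (hgc : HasCompactSupport g) {S : Finset (ℤ × ℤ)}
    (hS : ∀ z ∈ tsupport f ∪ tsupport g, z ∈ ⋃ i ∈ S, gridCell ε a i)
    {ψ : ℝ × ℝ → ℝ} {L : ℝ≥0} (hψ : LipschitzWith L ψ) :
    ‖(∫ z, (lineDeriv ℝ ψ z (1, 0) * f z + lineDeriv ℝ ψ z (0, 1) * g z)) +
        ∑ i ∈ S, cellFlux ε a f g i * ψ (gridNode ε a i)‖ₑ ≤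
      L * (ENNReal.ofReal ε * ∫⁻ z, ‖divergence f g z‖ₑ) := by
  have hosc : ∀ i ∈ S, ∀ z ∈ gridCell ε a i,
      ‖ψ z - ψ (gridNode ε a i)‖ₑ ≤ L * ENNReal.ofReal ε := by
    intro i _ z hz
    rw [← edist_eq_enorm_sub]
    refine (hψ z _).trans ?_
    gcongr
    rw [edist_dist]
    exact ENNReal.ofReal_le_ofReal
      (dist_le_of_mem_Icc_gridNode (gridCell_subset_Icc i hz) (gridNode_mem_Icc hε i))
  have hDcont := continuous_divergence hf hg
  have hDc := hasCompactSupport_divergence hfc hgc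
  have hcells := enorm_integral_mul_sub_sum_le measurableSet_gridCell pairwise_disjoint_gridCell
    (hDcont.integrable_of_hasCompactSupport (μ := volume) hDc)
    ((hDcont.mul hψ.continuous).integrable_of_hasCompactSupport hDc.mul_right)
    (fun z hz => divergence_eq_zero_of_notMem (mt (hS z) hz)) hosc
  rw [integral_lineDeriv_add_eq_neg_divergence hψ hf hfc hg hgc, neg_add_eq_sub, ← mul_assoc,
    ← enorm_neg, neg_sub]
  simpa only [setIntegral_gridCell_divergence hε hf hg] using hcells

theorem enorm_sum_cellFlux_mul_gridNode_le (hε : 0 < ε) (f g : ℝ × ℝ → ℝ) {S : Finset (ℤ × ℤ)}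
    (hS : ∀ i, i ∈ S ↔ i ∈ interiorCells Ω ε a) {ψ : ℝ × ℝ → ℝ} {L : ℝ≥0}
    (hψ : LipschitzWith L ψ) (hψΩ : ∀ z ∉ Ω, ψ z = 0) :
    ‖∑ i ∈ S, cellFlux ε a f g i * ψ (gridNode ε a i)‖ₑ ≤
      L * ENNReal.ofReal (3 * ε) *
        ((∑' k : ℤ, ∫⁻ y, ‖f (a.1 + k • ε, y)‖ₑ) + ∑' k : ℤ, ∫⁻ x, ‖g (x, a.2 + k • ε)‖ₑ) := by
  have hm : ∀ i ∈ S, cellFlux ε a f g i * ψ (gridNode ε a i) =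
      cellFlux ε a f g i * trimmedValue Ω ε a ψ i := fun i hi => by
    rw [trimmedValue, indicator_of_mem ((hS i).1 hi)]
  rw [Finset.sum_congr rfl hm]
  exact enorm_sum_cellFlux_mul_le hε f g (fun i hi => indicator_of_notMem (mt (hS i).2 hi) _)
    (enorm_trimmedValue_sub_le hε.le hψ hψΩ (by simp [Prod.norm_def]))
    (enorm_trimmedValue_sub_le hε.le hψ hψΩ (by simp [Prod.norm_def]))

theorem enorm_integral_lineDeriv_add_sum_cellFlux_le (hε : 0 < ε) {p q f g : ℝ × ℝ → ℝ}
    (hp : Integrable p) (hq : Integrable q)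
    (hpline : ∀ k : ℤ, Integrable fun y => p (a.1 + k • ε, y))
    (hqline : ∀ k : ℤ, Integrable fun x => q (x, a.2 + k • ε))
    (hf : ContDiff ℝ 1 f) (hfc : HasCompactSupport f) (hg : ContDiff ℝ 1 g)
    (hgc : HasCompactSupport g) (hfg : cthickening ε (tsupport f ∪ tsupport g) ⊆ Ω)
    {S : Finset (ℤ × ℤ)} (hS : ∀ i, i ∈ S ↔ i ∈ interiorCells Ω ε a) {ψ : ℝ × ℝ → ℝ} {L : ℝ≥0}
    (hψ : LipschitzWith L ψ) (hψΩ : ∀ z ∉ Ω, ψ z = 0) :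
    ‖(∫ z, (lineDeriv ℝ ψ z (1, 0) * p z + lineDeriv ℝ ψ z (0, 1) * q z)) +
        ∑ i ∈ S, cellFlux ε a p q i * ψ (gridNode ε a i)‖ₑ ≤
      L * ((∫⁻ z, ‖p z - f z‖ₑ) + (∫⁻ z, ‖q z - g z‖ₑ) +
        ENNReal.ofReal ε * (∫⁻ z, ‖divergence f g z‖ₑ) +
        ENNReal.ofReal (3 * ε) * ((∑' k : ℤ, ∫⁻ y, ‖p (a.1 + k • ε, y) - f (a.1 + k • ε, y)‖ₑ) +
          ∑' k : ℤ, ∫⁻ x, ‖q (x, a.2 + k • ε) - g (x, a.2 + k • ε)‖ₑ)) := by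
  have hcover : ∀ z ∈ tsupport f ∪ tsupport g, z ∈ ⋃ i ∈ S, gridCell ε a i := by
    intro z hz
    obtain ⟨i, hi⟩ := mem_iUnion.1 ((iUnion_gridCell (a := a) hε).symm ▸ mem_univ z)
    exact mem_iUnion₂.2 ⟨i, (hS i).2 (mem_interiorCells_of_cthickening_subset hfg hi hz), hi⟩
  have hsmooth := enorm_integral_lineDeriv_add_sum_cellFlux_le_of_contDiff hε.le hf hfc hg hgc
    hcover hψ
  have hflux := enorm_sum_cellFlux_mul_gridNode_le hε (p - f) (q - g) hS hψ hψΩ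
  have hfi := hf.continuous.integrable_of_hasCompactSupport (μ := volume) hfc
  have hgi := hg.continuous.integrable_of_hasCompactSupport (μ := volume) hgc
  have hdecomp : (∫ z, (lineDeriv ℝ ψ z (1, 0) * p z + lineDeriv ℝ ψ z (0, 1) * q z)) +
      ∑ i ∈ S, cellFlux ε a p q i * ψ (gridNode ε a i) =
      (∫ z, lineDeriv ℝ ψ z (1, 0) * (p - f) z) + (∫ z, lineDeriv ℝ ψ z (0, 1) * (q - g) z) +
      ((∫ z, (lineDeriv ℝ ψ z (1, 0) * f z + lineDeriv ℝ ψ z (0, 1) * g z)) +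
        ∑ i ∈ S, cellFlux ε a f g i * ψ (gridNode ε a i)) +
      ∑ i ∈ S, cellFlux ε a (p - f) (q - g) i * ψ (gridNode ε a i) := by
    rw [integral_add (integrable_lineDeriv_mul hψ hp) (integrable_lineDeriv_mul hψ hq),
      integral_add (integrable_lineDeriv_mul hψ hfi) (integrable_lineDeriv_mul hψ hgi),
      integral_lineDeriv_mul_sub hψ hp hfi, integral_lineDeriv_mul_sub hψ hq hgi]
    simp only [cellFlux_sub hpline hqline hf.continuous hg.continuous, sub_mul,
      Finset.sum_sub_distrib]
    ring
  rw [hdecomp, mul_add, mul_add, mul_add, ← mul_assoc (L : ℝ≥0∞) (ENNReal.ofReal (3 * ε))]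
  refine (enorm_add_le _ _).trans (add_le_add ((enorm_add_le _ _).trans (add_le_add
    ((enorm_add_le _ _).trans (add_le_add ?_ ?_)) hsmooth)) hflux)
  · exact enorm_integral_lineDeriv_mul_le hψ (by simp [Prod.norm_def])
  · exact enorm_integral_lineDeriv_mul_le hψ (by simp [Prod.norm_def])

theorem exists_grid_origin {e₁ e₂ : ℝ × ℝ → ℝ} (he₁ : AEMeasurable e₁) (he₂ : AEMeasurable e₂)
    {P₁ P₂ : ℝ → Prop} (hP₁ : ∀ᵐ x, P₁ x) (hP₂ : ∀ᵐ y, P₂ y) (hε : 0 < ε) :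
    ∃ a : ℝ × ℝ, (∀ k : ℤ, P₁ (a.1 + k • ε)) ∧ (∀ k : ℤ, P₂ (a.2 + k • ε)) ∧
      ENNReal.ofReal ε * ((∑' k : ℤ, ∫⁻ y, ‖e₁ (a.1 + k • ε, y)‖ₑ) +
        ∑' k : ℤ, ∫⁻ x, ‖e₂ (x, a.2 + k • ε)‖ₑ) ≤ (∫⁻ z, ‖e₁ z‖ₑ) + ∫⁻ z, ‖e₂ z‖ₑ := by
  obtain ⟨a₁, ha₁, hle₁⟩ := exists_shift_tsum_mul_le
    (AEMeasurable.lintegral_prod_right' he₁.enorm) hP₁ hε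
  obtain ⟨a₂, ha₂, hle₂⟩ := exists_shift_tsum_mul_le
    (AEMeasurable.lintegral_prod_left' he₂.enorm) hP₂ hε
  rw [mul_comm] at hle₁ hle₂
  refine ⟨(a₁, a₂), ha₁, ha₂, ?_⟩
  rw [mul_add]
  exact add_le_add (hle₁.trans_eq (lintegral_prod _ he₁.enorm).symm)
    (hle₂.trans_eq (lintegral_prod_symm _ he₂.enorm).symm)

theorem exists_mesh {X : Type*} [PseudoMetricSpace X] {K Ω : Set X} (hK : IsCompact K)
    (hΩ : IsOpen Ω) (hKΩ : K ⊆ Ω) {C η : ℝ≥0∞} (hC : C ≠ ∞) (hη : η ≠ 0) :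
    ∃ ε : ℝ, 0 < ε ∧ cthickening ε K ⊆ Ω ∧ ENNReal.ofReal ε * C ≤ η := by
  obtain ⟨δ, hδ, hδΩ⟩ := hK.exists_cthickening_subset_open hΩ hKΩ
  have hlim : Tendsto (fun ε : ℝ => ENNReal.ofReal ε * C) (𝓝[>] 0) (𝓝 0) := by
    simpa using ENNReal.Tendsto.mul_const
      (ENNReal.tendsto_ofReal (tendsto_nhdsWithin_of_tendsto_nhds (tendsto_id (x := 𝓝 (0 : ℝ)))))
      (Or.inr hC)
  have hsmall : ∀ᶠ ε in 𝓝[>] (0 : ℝ), ε ∈ Ioo 0 δ := Ioo_mem_nhdsGT hδ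
  obtain ⟨ε, ⟨hε, hεδ⟩, hεη⟩ := (hsmall.and (hlim.eventually_le_const hη.bot_lt)).exists
  exact ⟨ε, hε, (cthickening_mono hεδ.le K).trans hδΩ, hεη⟩

theorem exists_grid_abs_integral_lineDeriv_add_sum_cellFlux_le (hΩ : IsOpen Ω)
    {p q : ℝ × ℝ → ℝ} (hp : Integrable p) (hq : Integrable q) (hpΩ : ∀ z ∉ Ω, p z = 0)
    (hqΩ : ∀ z ∉ Ω, q z = 0) {P₁ P₂ : ℝ → Prop} (hP₁ : ∀ᵐ x, P₁ x) (hP₂ : ∀ᵐ y, P₂ y)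
    {η : ℝ} (hη : 0 < η) :
    ∃ ε : ℝ, 0 < ε ∧ ∃ a : ℝ × ℝ, (∀ k : ℤ, P₁ (a.1 + k • ε)) ∧ (∀ k : ℤ, P₂ (a.2 + k • ε)) ∧
      ∀ S : Finset (ℤ × ℤ), (∀ i, i ∈ S ↔ i ∈ interiorCells Ω ε a) →
      ∀ (L : ℝ≥0) (ψ : ℝ × ℝ → ℝ), LipschitzWith L ψ → (∀ z ∉ Ω, ψ z = 0) →
        |(∫ z, (lineDeriv ℝ ψ z (1, 0) * p z + lineDeriv ℝ ψ z (0, 1) * q z)) +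
          ∑ i ∈ S, cellFlux ε a p q i * ψ (gridNode ε a i)| ≤ η * L := by
  have hδ : ENNReal.ofReal (η / 9) ≠ 0 := by simpa using hη
  obtain ⟨f, hf, hfc, hfΩ, hpf⟩ := exists_contDiff_lintegral_enorm_sub_le hΩ hp hpΩ hδ
  obtain ⟨g, hg, hgc, hgΩ, hqg⟩ := exists_contDiff_lintegral_enorm_sub_le hΩ hq hqΩ hδ
  have hf₁ : ContDiff ℝ 1 f := hf.of_le (by norm_cast)
  have hg₁ : ContDiff ℝ 1 g := hg.of_le (by norm_cast)
  have hdiv : ∫⁻ z, ‖divergence f g z‖ₑ ≠ ∞ :=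
    ((continuous_divergence hf₁ hg₁).integrable_of_hasCompactSupport
      (hasCompactSupport_divergence hfc hgc)).hasFiniteIntegral.ne
  obtain ⟨ε, hε, hεΩ, hεη⟩ := exists_mesh (hfc.isCompact.union hgc.isCompact) hΩ
    (union_subset hfΩ hgΩ) hdiv hδ
  obtain ⟨a, ha₁, ha₂, hlines⟩ := exists_grid_origin
    (hp.aemeasurable.sub hf.continuous.measurable.aemeasurable)
    (hq.aemeasurable.sub hg.continuous.measurable.aemeasurable)
    (hP₁.and hp.prod_right_ae) (hP₂.and hq.prod_left_ae) hε
  refine ⟨ε, hε, a, fun k => (ha₁ k).1, fun k => (ha₂ k).1, fun S hS L ψ hψ hψΩ => ?_⟩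
  have hle := enorm_integral_lineDeriv_add_sum_cellFlux_le hε hp hq (fun k => (ha₁ k).2)
    (fun k => (ha₂ k).2) hf₁ hfc hg₁ hgc hεΩ hS hψ hψΩ
  rw [← Real.norm_eq_abs, ← ENNReal.ofReal_le_ofReal_iff (by positivity), ofReal_norm]
  refine hle.trans ?_
  rw [mul_comm η, ENNReal.ofReal_mul L.coe_nonneg, ENNReal.ofReal_coe_nnreal]
  gcongr
  calc _ ≤ ENNReal.ofReal (η / 9) + ENNReal.ofReal (η / 9) + ENNReal.ofReal (η / 9) +
        3 * (ENNReal.ofReal (η / 9) + ENNReal.ofReal (η / 9)) := by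
        rw [ENNReal.ofReal_mul (by norm_num), mul_assoc, ENNReal.ofReal_ofNat]
        gcongr
        exact hlines.trans (add_le_add hpf hqg)
    _ = 9 * ENNReal.ofReal (η / 9) := by ring
    _ = ENNReal.ofReal η := by
        rw [← ENNReal.ofReal_ofNat, ← ENNReal.ofReal_mul (by norm_num)]
        congr 1
        ring

end Grid

section Phase

/-- The derivative of the phase of `u`, a map of unit modulus, when `g` is a derivative of `u`. -/
def phaseDeriv {X : Type*} (u g : X → ℂ) (z : X) : ℝ := (starRingEnd ℂ (u z) * g z).im

theorem integrable_conj_mul {X : Type*} [MeasurableSpace X] {μ : Measure X} {u g : X → ℂ}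
    (hu : AEStronglyMeasurable u μ) (hnorm : ∀ᵐ z ∂μ, ‖u z‖ ≤ 1) (hg : Integrable g μ) :
    Integrable (fun z => starRingEnd ℂ (u z) * g z) μ := by
  refine hg.bdd_mul (c := 1) (Complex.continuous_conj.comp_aestronglyMeasurable hu) ?_
  simpa only [RCLike.norm_conj] using hnorm

theorem intervalIntegral_phaseDeriv {u g : ℝ → ℂ}
    (h : Integrable fun t => starRingEnd ℂ (u t) * g t) (s t : ℝ) :
    ∫ r in s..t, phaseDeriv u g r = (∫ r in s..t, starRingEnd ℂ (u r) * g r).im :=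
  Complex.imCLM.intervalIntegral_comp_comm h.intervalIntegrable

variable {Ω : Set (ℝ × ℝ)} {u g₁ g₂ : ℝ × ℝ → ℂ} {φ : ℕ → ContDiffBump (0 : ℝ × ℝ)}

theorem norm_le_one_of_eq_zero_off {z : ℝ × ℝ} (hz : z ∈ Ω → ‖u z‖ = 1)
    (huΩ : ∀ z ∉ Ω, u z = 0) : ‖u z‖ ≤ 1 := by
  by_cases hzΩ : z ∈ Ω
  · exact (hz hzΩ).le
  · simp [huΩ z hzΩ]

theorem IsGoodLine.integrable_conj_mul {g : ℝ × ℝ → ℂ} {γ : ℝ → ℝ × ℝ}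
    (h : IsGoodLine Ω volume φ u g γ) (huΩ : ∀ z ∉ Ω, u z = 0) :
    Integrable fun t => starRingEnd ℂ (u (γ t)) * g (γ t) :=
  _root_.integrable_conj_mul h.integrable_comp.aestronglyMeasurable
    (h.norm_eq_one.mono fun _ ht => norm_le_one_of_eq_zero_off ht huΩ) h.integrable_deriv_comp

theorem exists_int_cellFlux_eq (hΩ : IsOpen Ω) (hu : LocallyIntegrable u)
    (hg₁ : LocallyIntegrable g₁) (hg₂ : LocallyIntegrable g₂)
    (hw₁ : HasWeakDirDeriv Ω volume (1, 0) u g₁) (hw₂ : HasWeakDirDeriv Ω volume (0, 1) u g₂)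
    (huΩ : ∀ z ∉ Ω, u z = 0) (hφ : Tendsto (fun n => (φ n).rOut) atTop (𝓝 0))
    {ε : ℝ} (hε : 0 < ε) {a : ℝ × ℝ}
    (hv : ∀ k : ℤ, IsGoodLine Ω volume φ u g₂ (Prod.mk (a.1 + k • ε)))
    (hh : ∀ k : ℤ, IsGoodLine Ω volume φ u g₁ (·, a.2 + k • ε)) {i : ℤ × ℤ}
    (hi : i ∈ interiorCells Ω ε a) :
    ∃ n : ℤ, cellFlux ε a (fun z => -(1 / 2) * phaseDeriv u g₂ z)
      (fun z => 1 / 2 * phaseDeriv u g₁ z) i = -(Real.pi * n) := by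
  have hlt : ∀ b : ℝ, ∀ k : ℤ, b + k • ε < b + (k + 1) • ε := fun b k => by
    simpa [add_smul] using hε
  rw [interiorCells, mem_ofPred_eq, Icc_prod_eq] at hi
  obtain ⟨n, hn⟩ := exists_int_circulation_eq hΩ hu hg₁ hg₂ hw₁ hw₂ hφ (hlt a.1 i.1)
    (hlt a.2 i.2) hi (hv i.1) (hv (i.1 + 1)) (hh i.2) (hh (i.2 + 1))
  have hv_int : ∀ k : ℤ, ∀ s t, ∫ y in s..t, phaseDeriv u g₂ (a.1 + k • ε, y) = _ := fun k =>
    intervalIntegral_phaseDeriv ((hv k).integrable_conj_mul huΩ)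
  have hh_int : ∀ k : ℤ, ∀ s t, ∫ x in s..t, phaseDeriv u g₁ (x, a.2 + k • ε) = _ := fun k =>
    intervalIntegral_phaseDeriv ((hh k).integrable_conj_mul huΩ)
  have him := congrArg Complex.im hn
  have hturn : ((n : ℂ) * (2 * Real.pi * Complex.I)).im = n * (2 * Real.pi) := by simp
  simp only [Complex.add_im, hturn] at him
  refine ⟨n, ?_⟩
  simp only [cellFlux, leftEdgeIntegral, bottomEdgeIntegral, Prod.fst_add, Prod.snd_add, add_zero,
    intervalIntegral.integral_const_mul, hv_int, hh_int]
  linarith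

/-- The integrand is `∇ψ · λ_u`, in the coordinates of the plane. -/
theorem exists_chain_abs_integral_lineDeriv_sub_le (hΩ : IsOpen Ω) (hΩv : volume Ω ≠ ∞)
    (hu : Integrable u) (hg₁ : Integrable g₁) (hg₂ : Integrable g₂)
    (hw₁ : HasWeakDirDeriv Ω volume (1, 0) u g₁) (hw₂ : HasWeakDirDeriv Ω volume (0, 1) u g₂)
    (hnorm : ∀ᵐ z, z ∈ Ω → ‖u z‖ = 1) (huΩ : ∀ z ∉ Ω, u z = 0) {η : ℝ} (hη : 0 < η) :
    ∃ c ∈ Finsupp.supported ℤ ℤ Ω, ∀ (L : ℝ≥0) (ψ : ℝ × ℝ → ℝ), LipschitzWith L ψ →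
      (∀ z ∉ Ω, ψ z = 0) →
      |(∫ z, (lineDeriv ℝ ψ z (1, 0) * (-(1 / 2) * phaseDeriv u g₂ z) +
          lineDeriv ℝ ψ z (0, 1) * (1 / 2 * phaseDeriv u g₁ z))) -
        Real.pi * Finsupp.linearCombination ℤ ψ c| ≤ η * L := by
  obtain ⟨φ, hφ, hφL1⟩ := exists_seq_contDiffBump_tsum_ne_top (κ := Fin 3) (f := ![u, g₁, g₂])
    (μ := volume) (by simp [Fin.forall_fin_succ, hu, hg₁, hg₂])
  have hphase : ∀ {g}, Integrable g → Integrable (phaseDeriv u g) := fun hg =>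
    (integrable_conj_mul hu.aestronglyMeasurable
      (hnorm.mono fun z hz => norm_le_one_of_eq_zero_off hz huΩ) hg).im
  have hphaseΩ : ∀ g, ∀ z ∉ Ω, phaseDeriv u g z = 0 := fun g z hz => by
    simp [phaseDeriv, huΩ z hz]
  obtain ⟨ε, hε, a, hv, hh, hgrid⟩ := exists_grid_abs_integral_lineDeriv_add_sum_cellFlux_le hΩ
    ((hphase hg₂).const_mul (-(1 / 2))) ((hphase hg₁).const_mul (1 / 2))
    (fun z hz => by rw [hphaseΩ _ z hz, mul_zero]) (fun z hz => by rw [hphaseΩ _ z hz, mul_zero])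
    (ae_isGoodLine_vertical hu hg₂ hnorm (hφL1 0) (hφL1 2))
    (ae_isGoodLine_horizontal hu hg₁ hnorm (hφL1 0) (hφL1 1)) hη
  choose! n hn using fun i => exists_int_cellFlux_eq hΩ hu.locallyIntegrable hg₁.locallyIntegrable
    hg₂.locallyIntegrable hw₁ hw₂ huΩ hφ hε hv hh (i := i)
  have hfin : (interiorCells Ω ε a).Finite := finite_interiorCells hε hΩv
  refine ⟨∑ i ∈ hfin.toFinset, Finsupp.single (gridNode ε a i) (n i), ?_, fun L ψ hψ hψΩ => ?_⟩
  · exact Submodule.sum_mem _ fun i hi =>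
      Finsupp.single_mem_supported ℤ _ (hfin.mem_toFinset.1 hi (gridNode_mem_Icc hε.le i))
  · have hsum : Real.pi * Finsupp.linearCombination ℤ ψ
        (∑ i ∈ hfin.toFinset, Finsupp.single (gridNode ε a i) (n i)) =
        -∑ i ∈ hfin.toFinset, cellFlux ε a (fun z => -(1 / 2) * phaseDeriv u g₂ z)
          (fun z => 1 / 2 * phaseDeriv u g₁ z) i * ψ (gridNode ε a i) := by
      rw [map_sum, Finset.mul_sum, ← Finset.sum_neg_distrib]
      refine Finset.sum_congr rfl fun i hi => ?_
      rw [hn i (hfin.mem_toFinset.1 hi), Finsupp.linearCombination_single, zsmul_eq_mul]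
      ring
    rw [hsum, sub_neg_eq_add]
    exact hgrid hfin.toFinset (fun i => hfin.mem_toFinset) L ψ hψ hψΩ

end Phase

section Transport

variable {E E' F F' : Type*} [NormedAddCommGroup E] [NormedSpace ℝ E]
  [NormedAddCommGroup E'] [NormedSpace ℝ E']
  [NormedAddCommGroup F] [NormedSpace ℝ F] [NormedAddCommGroup F'] [NormedSpace ℝ F']

theorem lineDeriv_comp_symm (e : E ≃L[ℝ] E') (f : E → F) (x v : E) :
    lineDeriv ℝ (fun z => f (e.symm z)) (e x) (e v) = lineDeriv ℝ f x v := by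
  simp only [lineDeriv, map_add, map_smul, e.symm_apply_apply]

variable [MeasurableSpace E] [MeasurableSpace E']

theorem HasWeakDirDeriv.continuousLinearEquiv_comp {Ω : Set E} {μ : Measure E} {v : E}
    {u g : E → F} (hw : HasWeakDirDeriv Ω μ v u g) (T : F ≃L[ℝ] F') :
    HasWeakDirDeriv Ω μ v (fun x => T (u x)) (fun x => T (g x)) := by
  intro φ hφ hφc hφΩ
  simp only [← map_smul, ← map_neg, T.integral_comp_comm, hw φ hφ hφc hφΩ]

theorem HasWeakDirDeriv.comp_symm [BorelSpace E] [BorelSpace E'] {Ω : Set E} {μ : Measure E}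
    {ν : Measure E'} {v : E} {u g : E → F} (hw : HasWeakDirDeriv Ω μ v u g) (e : E ≃L[ℝ] E')
    (he : MeasurePreserving e μ ν) :
    HasWeakDirDeriv (e.symm ⁻¹' Ω) ν (e v) (fun z => u (e.symm z)) (fun z => g (e.symm z)) := by
  intro φ hφ hφc hφΩ
  have hsupp : tsupport (φ ∘ e) ⊆ Ω := by
    have hpre : tsupport (φ ∘ e) = e ⁻¹' tsupport φ :=
      tsupport_comp_eq_preimage φ e.toHomeomorph
    rw [hpre]
    exact fun x hx => by simpa using hφΩ hx
  have hderiv : ∀ x, fderiv ℝ (φ ∘ e) x v = fderiv ℝ φ (e x) (e v) := fun x => by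
    rw [e.comp_right_fderiv]
    rfl
  have htest := hw (φ ∘ e) (hφ.comp e.contDiff) (hφc.comp_homeomorph e.toHomeomorph) hsupp
  simp only [hderiv, Function.comp_apply] at htest
  have he' : MeasurableEmbedding e := e.toHomeomorph.measurableEmbedding
  rw [← he.integral_comp he', ← he.integral_comp he']
  simpa only [e.symm_apply_apply] using htest

end Transport

section ZeroExtension

theorem segment_inter_frontier_nonempty {E : Type*} [AddCommGroup E] [Module ℝ E]
    [TopologicalSpace E] [ContinuousAdd E] [ContinuousSMul ℝ E] {s : Set E} {x y : E}
    (hx : x ∈ interior s) (hy : y ∉ s) : (segment ℝ x y ∩ frontier s).Nonempty := by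
  by_contra hempty
  have hseg : IsPreconnected (segment ℝ x y) := (convex_segment x y).isPreconnected
  refine hy (interior_subset (hseg.subset_left_of_subset_union
    isOpen_interior isClosed_closure.isOpen_compl
    (disjoint_compl_right.mono_left interior_subset_closure) (fun z hz => ?_)
    ⟨x, left_mem_segment ℝ x y, hx⟩ (right_mem_segment ℝ x y)))
  by_contra hz'
  rw [mem_union, not_or, notMem_compl_iff] at hz'
  exact hempty ⟨z, hz, hz'.2, hz'.1⟩

theorem lipschitzWith_indicator {E : Type*} [SeminormedAddCommGroup E] [NormedSpace ℝ E] {Ω : Set E}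
    (hΩ : IsOpen Ω) {φ : E → ℝ} {L : ℝ≥0} (hφ : LipschitzOnWith L φ (closure Ω))
    (hφ₀ : ∀ p ∈ frontier Ω, φ p = 0) : LipschitzWith L (Ω.indicator φ) := by
  have hcross : ∀ x ∈ Ω, ∀ y ∉ Ω, dist (φ x) 0 ≤ L * dist x y := by
    intro x hx y hy
    obtain ⟨w, hwseg, hwfr⟩ := segment_inter_frontier_nonempty (hΩ.interior_eq.symm ▸ hx) hy
    calc dist (φ x) 0 = dist (φ x) (φ w) := by rw [hφ₀ w hwfr]
      _ ≤ L * dist x w := hφ.dist_le_mul x (subset_closure hx) w (frontier_subset_closure hwfr)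
      _ ≤ L * dist x y := by
        gcongr
        linarith [dist_add_dist_of_mem_segment hwseg, dist_nonneg (x := w) (y := y)]
  refine LipschitzWith.of_dist_le_mul fun x y => ?_
  by_cases hx : x ∈ Ω <;> by_cases hy : y ∈ Ω
  · simpa only [indicator_of_mem hx, indicator_of_mem hy] using
      hφ.dist_le_mul x (subset_closure hx) y (subset_closure hy)
  · simpa only [indicator_of_mem hx, indicator_of_notMem hy] using hcross x hx y hy
  · simpa only [indicator_of_notMem hx, indicator_of_mem hy, dist_comm] using hcross y hy x hx
  · rw [indicator_of_notMem hx, indicator_of_notMem hy, dist_self]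
    positivity

end ZeroExtension

section Plane

/-- The identification of the Euclidean plane with `ℝ × ℝ`, whose norm is the supremum norm. -/
def planeEquivProd : R2 ≃L[ℝ] ℝ × ℝ :=
  (EuclideanSpace.equiv (Fin 2) ℝ).trans (ContinuousLinearEquiv.finTwoArrow ℝ ℝ)

/-- The identification of the Euclidean plane with `ℂ`. -/
def planeEquivComplex : R2 ≃ₗᵢ[ℝ] ℂ := Complex.orthonormalBasisOneI.repr.symm

theorem measurePreserving_planeEquivProd : MeasurePreserving planeEquivProd volume volume :=
  (volume_preserving_finTwoArrow ℝ).comp (PiLp.volume_preserving_ofLp (Fin 2))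

theorem measurePreserving_planeEquivProd_symm :
    MeasurePreserving planeEquivProd.symm volume volume :=
  measurePreserving_planeEquivProd.symm planeEquivProd.toHomeomorph.toMeasurableEquiv

theorem planeEquivProd_single_zero : planeEquivProd (EuclideanSpace.single 0 1) = (1, 0) := by
  change ((EuclideanSpace.single 0 1 : R2) 0, (EuclideanSpace.single 0 1 : R2) 1) = _
  simp

theorem planeEquivProd_single_one : planeEquivProd (EuclideanSpace.single 1 1) = (0, 1) := by
  change ((EuclideanSpace.single 1 1 : R2) 0, (EuclideanSpace.single 1 1 : R2) 1) = _
  simp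

variable {Ω : Set R2} {u : R2 → R2} {G : R2 → Matrix (Fin 2) (Fin 2) ℝ}

/-- The `j`-th column of the matrix field `G`: the partial derivative `∂ⱼu` if `G = ∇u`. -/
def gradColumn (G : R2 → Matrix (Fin 2) (Fin 2) ℝ) (j : Fin 2) (x : R2) : R2 :=
  WithLp.toLp 2 fun i => G x i j

/-- The zero extension of `f` from `Ω`, as a complex function in the coordinates of `ℝ × ℝ`. -/
def complexZeroExtension (Ω : Set R2) (f : R2 → R2) (z : ℝ × ℝ) : ℂ :=
  planeEquivComplex (Ω.indicator f (planeEquivProd.symm z))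

theorem complexZeroExtension_eq_zero {f : R2 → R2} {z : ℝ × ℝ}
    (hz : z ∉ planeEquivProd.symm ⁻¹' Ω) : complexZeroExtension Ω f z = 0 := by
  rw [complexZeroExtension, indicator_of_notMem (s := Ω) hz, map_zero]

theorem integrable_complexZeroExtension (hΩ : IsOpen Ω) {f : R2 → R2} (hf : IntegrableOn f Ω) :
    Integrable (complexZeroExtension Ω f) :=
  planeEquivComplex.toContinuousLinearEquiv.integrable_comp_iff.2 <|
    measurePreserving_planeEquivProd_symm.integrable_comp_of_integrable <|
      (integrable_indicator_iff hΩ.measurableSet).2 hf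

theorem integrableOn_gradColumn (hG : ∀ i j, IntegrableOn (fun x => G x i j) Ω) (j : Fin 2) :
    IntegrableOn (gradColumn G j) Ω :=
  Integrable.of_eval_piLp fun i => hG i j

theorem SphereValued.ae_norm_complexZeroExtension (hΩ : IsOpen Ω) (hS : SphereValued Ω u) :
    ∀ᵐ z, z ∈ planeEquivProd.symm ⁻¹' Ω → ‖complexZeroExtension Ω u z‖ = 1 := by
  have hS' : ∀ᵐ x, x ∈ Ω → ‖u x‖ = 1 := (ae_restrict_iff' hΩ.measurableSet).1 hS
  filter_upwards [measurePreserving_planeEquivProd_symm.quasiMeasurePreserving.ae hS'] with z hz hzΩ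
  rw [complexZeroExtension, planeEquivComplex.norm_map, indicator_of_mem (s := Ω) hzΩ, hz hzΩ]

theorem SphereValued.volume_ne_top (hu : IntegrableOn u Ω) (hS : SphereValued Ω u) :
    volume Ω ≠ ∞ := by
  have hone : Integrable (fun _ => (1 : ℝ)) (volume.restrict Ω) := hu.norm.congr hS
  have hfin := (integrable_const_iff_isFiniteMeasure one_ne_zero).1 hone
  simpa using measure_ne_top (volume.restrict Ω) univ

theorem IsWeakGradient.hasWeakDirDeriv (hΩ : IsOpen Ω) (hw : IsWeakGradient Ω u G)
    (hu : IntegrableOn u Ω) (hG : ∀ i j, IntegrableOn (fun x => G x i j) Ω) (j : Fin 2) :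
    HasWeakDirDeriv Ω volume (EuclideanSpace.single j 1) (Ω.indicator u)
      (Ω.indicator (gradColumn G j)) := by
  intro φ hφ hφc hφΩ
  have hintegrable : ∀ {h : R2 → ℝ} {f : R2 → R2}, Continuous h → HasCompactSupport h →
      IntegrableOn f Ω → ∀ i, Integrable (fun x => (h x • f x) i) (volume.restrict Ω) := by
    intro h f hh hhc hf i
    obtain ⟨C, hC⟩ := hhc.exists_bound_of_continuous hh
    exact (hf.bdd_smul C hh.aestronglyMeasurable (.of_forall hC)).eval_piLp i
  simp only [← indicator_smul, integral_indicator hΩ.measurableSet]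
  ext i
  have hφ' := (hφ.continuous_fderiv (by simp)).clm_apply
    (continuous_const (y := (EuclideanSpace.single j 1 : R2)))
  rw [PiLp.neg_apply, eval_integral_piLp (hintegrable hφ' (hφc.fderiv_apply (𝕜 := ℝ) _) hu),
    eval_integral_piLp (hintegrable hφ.continuous hφc (integrableOn_gradColumn hG j))]
  simpa only [PiLp.smul_apply, smul_eq_mul, gradColumn, mul_comm] using hw φ hφ hφc hφΩ i j

theorem MemW11.hasWeakDirDeriv_complexZeroExtension (hΩ : IsOpen Ω) (hu : MemW11 Ω u G)
    (j : Fin 2) :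
    HasWeakDirDeriv (planeEquivProd.symm ⁻¹' Ω) volume
      (planeEquivProd (EuclideanSpace.single j 1)) (complexZeroExtension Ω u)
      (complexZeroExtension Ω (gradColumn G j)) :=
  ((hu.2.2.hasWeakDirDeriv hΩ hu.1 hu.2.1 j).comp_symm planeEquivProd
    measurePreserving_planeEquivProd).continuousLinearEquiv_comp
    planeEquivComplex.toContinuousLinearEquiv

theorem phaseDeriv_complexZeroExtension (u : R2 → R2) (G : R2 → Matrix (Fin 2) (Fin 2) ℝ)
    (j : Fin 2) {x : R2} (hx : x ∈ Ω) :
    phaseDeriv (complexZeroExtension Ω u) (complexZeroExtension Ω (gradColumn G j))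
      (planeEquivProd x) = u x 0 * G x 1 j - u x 1 * G x 0 j := by
  simp [phaseDeriv, complexZeroExtension, planeEquivComplex, gradColumn, hx,
    Complex.orthonormalBasisOneI_repr_symm_apply]
  ring

theorem detPairing_eq_integral_lineDeriv (hΩ : IsOpen Ω) (u : R2 → R2)
    (G : R2 → Matrix (Fin 2) (Fin 2) ℝ) {φ : R2 → ℝ} {L : ℝ≥0}
    (hφ : LipschitzWith L (Ω.indicator φ)) :
    detPairing Ω u G φ = ∫ z,
      (lineDeriv ℝ (fun z => Ω.indicator φ (planeEquivProd.symm z)) z (1, 0) *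
        (-(1 / 2) * phaseDeriv (complexZeroExtension Ω u)
          (complexZeroExtension Ω (gradColumn G 1)) z) +
      lineDeriv ℝ (fun z => Ω.indicator φ (planeEquivProd.symm z)) z (0, 1) *
        (1 / 2 * phaseDeriv (complexZeroExtension Ω u)
          (complexZeroExtension Ω (gradColumn G 0)) z)) := by
  rw [← measurePreserving_planeEquivProd.integral_comp
    planeEquivProd.toHomeomorph.measurableEmbedding,
    ← setIntegral_eq_integral_of_forall_compl_eq_zero (s := Ω), detPairing]
  · refine integral_congr_ae ?_
    filter_upwards [ae_restrict_of_ae hφ.ae_differentiableAt, ae_restrict_mem hΩ.measurableSet]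
      with x hdiff hx
    have hev : Ω.indicator φ =ᶠ[𝓝 x] φ := by
      filter_upwards [hΩ.mem_nhds hx] with y hy using indicator_of_mem hy φ
    rw [← planeEquivProd_single_zero, ← planeEquivProd_single_one, lineDeriv_comp_symm,
      lineDeriv_comp_symm, hdiff.lineDeriv_eq_fderiv, hdiff.lineDeriv_eq_fderiv, hev.fderiv_eq,
      phaseDeriv_complexZeroExtension u G _ hx, phaseDeriv_complexZeroExtension u G _ hx,
      Fin.sum_univ_two]
    simp only [lambdaVec, Matrix.cons_val_zero, Matrix.cons_val_one]
    ring
  · intro x hx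
    have hzero : complexZeroExtension Ω u (planeEquivProd x) = 0 :=
      complexZeroExtension_eq_zero (by simpa using hx)
    simp [phaseDeriv, hzero]

theorem linearCombination_mapDomain_eq {X Y : Type*} {s : Set Y} (e : X → Y) {φ : Y → ℝ}
    {c : X →₀ ℤ} (hc : c ∈ Finsupp.supported ℤ ℤ (e ⁻¹' s)) :
    Finsupp.linearCombination ℤ φ (c.mapDomain e) =
      Finsupp.linearCombination ℤ (fun x => s.indicator φ (e x)) c := by
  rw [Finsupp.linearCombination_mapDomain, Finsupp.linearCombination_apply,
    Finsupp.linearCombination_apply]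
  exact Finsupp.sum_congr fun x hx => by
    rw [Function.comp_apply, indicator_of_mem (s := s) (hc hx)]

theorem exists_chain_abs_detPairing_sub_le (hΩ : IsOpen Ω) (hu : MemW11 Ω u G)
    (hS : SphereValued Ω u) {η : ℝ} (hη : 0 < η) :
    ∃ c ∈ Finsupp.supported ℤ ℤ Ω, ∀ L φ, IsLip0With L Ω φ →
      |detPairing Ω u G φ - Real.pi * Finsupp.linearCombination ℤ φ c| ≤ η * L := by
  let e := planeEquivProd
  let C : ℝ≥0 := ‖(e.symm : ℝ × ℝ →L[ℝ] R2)‖₊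
  have hvol : volume (e.symm ⁻¹' Ω) ≠ ∞ := by
    rw [measurePreserving_planeEquivProd_symm.measure_preimage hΩ.measurableSet.nullMeasurableSet]
    exact hS.volume_ne_top hu.1
  obtain ⟨c, hc, hcle⟩ := exists_chain_abs_integral_lineDeriv_sub_le
    (hΩ.preimage e.symm.continuous) hvol (integrable_complexZeroExtension hΩ hu.1)
    (integrable_complexZeroExtension hΩ (integrableOn_gradColumn hu.2.1 0))
    (integrable_complexZeroExtension hΩ (integrableOn_gradColumn hu.2.1 1))
    (planeEquivProd_single_zero ▸ hu.hasWeakDirDeriv_complexZeroExtension hΩ 0)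
    (planeEquivProd_single_one ▸ hu.hasWeakDirDeriv_complexZeroExtension hΩ 1)
    (hS.ae_norm_complexZeroExtension hΩ) (fun _ => complexZeroExtension_eq_zero)
    (η := η / (C + 1)) (by positivity)
  refine ⟨c.mapDomain e.symm, ?_, fun L φ hφ => ?_⟩
  · refine Finsupp.supported_mono (image_preimage_subset e.symm Ω) ?_
    rw [← Finsupp.lmapDomain_supported]
    exact Submodule.mem_map_of_mem hc
  have hψ := lipschitzWith_indicator hΩ hφ.1 hφ.2
  rw [linearCombination_mapDomain_eq e.symm hc, detPairing_eq_integral_lineDeriv hΩ u G hψ]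
  refine (hcle (L * C) _ (hψ.comp e.symm.lipschitz)
    fun z hz => indicator_of_notMem (s := Ω) hz φ).trans ?_
  rw [NNReal.coe_mul, div_mul_eq_mul_div, div_le_iff₀ (by positivity), mul_assoc η]
  gcongr
  exact le_add_of_nonneg_right zero_le_one

theorem frontier_nonempty_of_volume_ne_top (hne : Ω.Nonempty) (hΩ : volume Ω ≠ ∞) :
    (frontier Ω).Nonempty := by
  refine nonempty_frontier_iff.2 ⟨hne, ?_⟩
  rintro rfl
  exact hΩ (measure_univ_of_isAddLeftInvariant volume)

theorem detJacobian_mem_X_general (Ω : Set R2) (hΩo : IsOpen Ω) (hΩne : Ω.Nonempty)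
    (u : R2 → R2) (G : R2 → Matrix (Fin 2) (Fin 2) ℝ)
    (hu : MemW11 Ω u G) (hS : SphereValued Ω u) :
    ∃ x y : ℕ → R2,
      (∀ i, x i ∈ closure Ω ∧ y i ∈ closure Ω ∧ x i ≠ y i ∧ (x i ∈ Ω ∨ y i ∈ Ω)) ∧
      Summable (fun i => dbar Ω (x i) (y i)) ∧
      ∀ φ : R2 → ℝ, MemLip0 Ω φ →
        Summable (fun i => |φ (x i) - φ (y i)|) ∧
        detPairing Ω u G φ = Real.pi * ∑' i, (φ (x i) - φ (y i)) := by
  have hfrontier := frontier_nonempty_of_volume_ne_top hΩne (hS.volume_ne_top hu.1)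
  obtain ⟨x, y, hxy, hsum, hφ⟩ := exists_dipoles_of_forall_chain hΩo hΩne hfrontier
    (T := fun φ => detPairing Ω u G φ / Real.pi) fun η hη => by
      obtain ⟨c, hc, hle⟩ := exists_chain_abs_detPairing_sub_le hΩo hu hS
        (mul_pos Real.pi_pos hη)
      refine ⟨c, hc, fun L φ hφ => ?_⟩
      have hπ := hle L φ hφ
      rwa [mul_assoc, ← mul_div_cancel₀ (detPairing Ω u G φ) Real.pi_ne_zero, ← mul_sub, abs_mul,
        abs_of_pos Real.pi_pos, mul_le_mul_iff_right₀ Real.pi_pos] at hπ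
  refine ⟨x, y, hxy, hsum, fun φ hφL => ?_⟩
  obtain ⟨habs, heq⟩ := hφ φ hφL
  exact ⟨habs, by rw [mul_comm, ← heq, div_mul_cancel₀ _ Real.pi_ne_zero]⟩

end Plane

/-- **Theorem (distributional Jacobian of `S¹`-valued maps).** For `u ∈ W^{1,1}(Ω;S¹)`
there is a sequence of dipoles `(x_i,y_i)` in `cl(Ω)`, each with at least one point
in `Ω`, with `Σ d̄_Ω(x_i,y_i) < ∞`, such that
`⟨Det(∇u),φ⟩ = π Σ (φ(x_i) − φ(y_i))` for all `φ ∈ Lip₀(Ω)`. -/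
theorem detJacobian_mem_X (Ω : Set R2) (hΩo : IsOpen Ω)
    (hΩb : Bornology.IsBounded Ω) (hΩc : IsConnected Ω) (hΩl : HasLipschitzBoundary Ω)
    (u : R2 → R2) (G : R2 → Matrix (Fin 2) (Fin 2) ℝ)
    (hu : MemW11 Ω u G) (hS : SphereValued Ω u) :
    ∃ x y : ℕ → R2,
      (∀ i, x i ∈ closure Ω ∧ y i ∈ closure Ω ∧ x i ≠ y i ∧ (x i ∈ Ω ∨ y i ∈ Ω)) ∧
      Summable (fun i => dbar Ω (x i) (y i)) ∧
      ∀ φ : R2 → ℝ, MemLip0 Ω φ →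
        Summable (fun i => |φ (x i) - φ (y i)|) ∧
        detPairing Ω u G φ = Real.pi * ∑' i, (φ (x i) - φ (y i)) := by
  exact detJacobian_mem_X_general Ω hΩo hΩc.nonempty u G hu hS
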